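/- arXiv:1805.08181 — 3 statements merged into one kernel-verified Lean document; each statement's English description precedes it below -/
import Mathlib

section
/- Let K be a field, let M be a d×n matrix over K of rank d, and let C ⊆ ℝⁿ be a matroidal cone. Let L be the field of rational functions over K in one indeterminate λ_{i,k} for each ordered pair (i,k) with 1 ≤ i,k ≤ n, i ≠ k, and e_k − e_i ∈ C. Let B be the n×n matrix over L with B_{i,k} = λ_{i,k} if i ≠ k and e_k − e_i ∈ C, and B_{i,k} = 0 otherwise, and let N = M·(1ₙ + t·B), a d×n matrix with entries in the polynomial ring L[t]. Then for every d-element subset z ⊆ {1,…,n}, the t-adic order ord_t det(N^z) (the largest m such that t^m divides det(N^z) in L[t], with ord_t 0 = ∞) equals the minimum of |z ∖ w| over all pairs (w, φ) where w ⊆ {1,…,n} is a d-element subset whose columns in M are linearly independent and φ : z ∖ w → w ∖ z is a bijection satisfying e_k − e_{φ(k)} ∈ C for all k ∈ z ∖ w; in particular ord_t det(N^z) = ∞ exactly when no such pair (w, φ) exists. Here N^z denotes the d×d submatrix of N with columns indexed by z. -/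
open scoped Classical

noncomputable section

/-- The standard basis vector `eᵢ` of `ℝⁿ`. -/
def eVec (n : ℕ) (i : Fin n) : Fin n → ℝ := Pi.single i 1

/-- A matroidal cone in `ℝⁿ`: the convex cone generated by finitely many vectors of the
form `eᵢ − eⱼ` with `i ≠ j`. -/
def IsMatroidalCone {n : ℕ} (C : Set (Fin n → ℝ)) : Prop :=
  ∃ S : Finset (Fin n × Fin n), (∀ p ∈ S, p.1 ≠ p.2) ∧
    C = {x | ∃ c : Fin n × Fin n → ℝ, (∀ p, 0 ≤ c p) ∧
      x = ∑ p ∈ S, c p • (eVec n p.1 - eVec n p.2)}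

/-- Index type of the indeterminates `λ_{i,k}`: ordered pairs `(i,k)` with `i ≠ k` and
`e_k − e_i ∈ C`. -/
def ConeIdx (n : ℕ) (C : Set (Fin n → ℝ)) : Type :=
  {p : Fin n × Fin n // p.1 ≠ p.2 ∧ eVec n p.2 - eVec n p.1 ∈ C}

/-- The field of rational functions over `K` in the indeterminates `λ_{i,k}`. -/
abbrev LField (K : Type*) [Field K] (n : ℕ) (C : Set (Fin n → ℝ)) : Type _ :=
  FractionRing (MvPolynomial (ConeIdx n C) K)

/-- The `n × n` matrix `B` with `B_{i,k} = λ_{i,k}` when `i ≠ k` and `e_k − e_i ∈ C`,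
and `B_{i,k} = 0` otherwise. -/
def Bmat (K : Type*) [Field K] (n : ℕ) (C : Set (Fin n → ℝ)) :
    Matrix (Fin n) (Fin n) (LField K n C) :=
  Matrix.of fun i k =>
    if h : i ≠ k ∧ eVec n k - eVec n i ∈ C then
      algebraMap (MvPolynomial (ConeIdx n C) K) (LField K n C)
        (MvPolynomial.X (⟨(i, k), h⟩ : ConeIdx n C))
    else 0

/-- The matrix `N = M · (1ₙ + t·B)` over the polynomial ring `L[t]`. -/
def Nmat {K : Type*} [Field K] {d n : ℕ} (M : Matrix (Fin d) (Fin n) K)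
    (C : Set (Fin n → ℝ)) : Matrix (Fin d) (Fin n) (Polynomial (LField K n C)) :=
  (M.map fun a =>
      Polynomial.C (algebraMap (MvPolynomial (ConeIdx n C) K) (LField K n C)
        (MvPolynomial.C a))) *
    (1 + Matrix.of fun i k => Polynomial.X * Polynomial.C (Bmat K n C i k))

/-- The `t`-adic order of a polynomial: the largest `m` such that `t^m` divides it,
with `ord_t 0 = ∞`. -/
def ordT {L : Type*} [Field L] (p : Polynomial L) : ℕ∞ :=
  sSup {m : ℕ∞ | ∃ k : ℕ, m = (k : ℕ∞) ∧ Polynomial.X ^ k ∣ p}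

/-!
Write `N^z` as the submatrix along an enumeration `g` of `z` and expand `det N^z` multilinearly:
each `f : Fin d → Fin n` contributes `det (M.submatrix id f)` times the entries `λ_{f j, g j}` with
`f j ≠ g j` times `t ^ hammingDist f g`. Distinct `f` yield distinct monomials in the `λ_{i,k}`, so
nothing cancels, and the order is the least Hamming distance to `g` of an `f` which picks a basis
`w` of columns and satisfies `e_{g j} − e_{f j} ∈ C` for all `j`. Such an `f` gives a bijection
`z → w` that may permute `z ∩ w`; since `e_i − e_k ∈ C` is a preorder, Hall's theorem turns it into
a matching of `z ∖ w` with `w ∖ z`.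
-/

section DetExpansion

variable {R m ι : Type*} [CommRing R] [Fintype m] [DecidableEq m] [Fintype ι]

theorem det_mul_eq_sum_prod_mul_det (A : Matrix m ι R) (B : Matrix ι m R) :
    (A * B).det = ∑ f : m → ι, (∏ j, B (f j) j) * (A.submatrix id f).det := by
  have hrows : (A * B).transpose = fun j => ∑ i, B i j • A.transpose i := by
    ext j r
    simp [Matrix.mul_apply, mul_comm]
  let detRows := (Matrix.detRowAlternating (n := m) (R := R)).toMultilinearMap
  calc
    (A * B).det = detRows fun j => ∑ i, B i j • A.transpose i := by
      rw [← Matrix.det_transpose, hrows]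
      rfl
    _ = ∑ f : m → ι, detRows fun j => B (f j) j • A.transpose (f j) := detRows.map_sum _
    _ = ∑ f : m → ι, (∏ j, B (f j) j) * (A.submatrix id f).det := by
      refine Finset.sum_congr rfl fun f _ => ?_
      rw [detRows.map_smul_univ, smul_eq_mul, ← Matrix.det_transpose (A.submatrix id f)]
      rfl

end DetExpansion

section ExchangeWeight

open Polynomial

variable {K L m ι : Type*} [CommRing K] [CommRing L] [Algebra K L]
  [Fintype m] [DecidableEq ι]

/-- The product of the entries of `B` used when each column `g j` is exchanged for `f j`;
columns with `f j = g j` are kept and contribute no factor. -/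
def exchangeWeight (B : Matrix ι ι L) (g f : m → ι) : L :=
  ∏ j with f j ≠ g j, B (f j) (g j)

theorem prod_one_add_X_mul_C_eq (B : Matrix ι ι L) (hB : ∀ i, B i i = 0) (g f : m → ι) :
    ∏ j, (1 + Matrix.of fun i k => X * C (B i k) : Matrix ι ι L[X]) (f j) (g j) =
      C (exchangeWeight B g f) * X ^ hammingDist f g := by
  have hfactor (j : m) :
      (1 + Matrix.of fun i k => X * C (B i k) : Matrix ι ι L[X]) (f j) (g j) =
        if f j ≠ g j then C (B (f j) (g j)) * X else 1 := by
    by_cases hj : f j = g j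
    · simp [hj, hB]
    · simp [hj, Matrix.one_apply_ne, X_mul_C]
  rw [Finset.prod_congr rfl fun j _ => hfactor j, ← Finset.prod_filter, Finset.prod_mul_distrib,
    Finset.prod_const, exchangeWeight, map_prod, hammingDist]

variable [DecidableEq m] [Fintype ι]

theorem coeff_det_mul_one_add_X_mul (M : Matrix m ι K) (B : Matrix ι ι L) (hB : ∀ i, B i i = 0)
    (g : m → ι) (k : ℕ) :
    (((M.map fun a => C (algebraMap K L a)) *
      (1 + Matrix.of fun i k => X * C (B i k))).submatrix id g).det.coeff k =
      ∑ f with hammingDist f g = k, (M.submatrix id f).det • exchangeWeight B g f := by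
  have hdet (f : m → ι) : ((M.map fun a => C (algebraMap K L a)).submatrix id f).det =
      C (algebraMap K L (M.submatrix id f).det) :=
    (RingHom.map_det (C.comp (algebraMap K L)) (M.submatrix id f)).symm
  rw [← Matrix.submatrix_mul_equiv _ _ _ (Equiv.refl ι), Equiv.coe_refl, Matrix.submatrix_id_id,
    det_mul_eq_sum_prod_mul_det, finsetSum_coeff, Finset.sum_filter]
  refine Finset.sum_congr rfl fun f _ => ?_
  simp only [Matrix.submatrix_apply, id]
  rw [prod_one_add_X_mul_C_eq B hB, hdet, coeff_mul_C, coeff_C_mul_X_pow, Algebra.smul_def,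
    ite_mul, zero_mul, mul_comm]
  simp only [eq_comm]

theorem X_pow_dvd_det_mul_one_add_X_mul_iff (M : Matrix m ι K) (B : Matrix ι ι L)
    (hB : ∀ i, B i i = 0) (g : m → ι) {s : Set (m → ι)}
    (hs : LinearIndepOn K (exchangeWeight B g) s) (hs' : ∀ f ∉ s, exchangeWeight B g f = 0)
    (k : ℕ) :
    X ^ k ∣ (((M.map fun a => C (algebraMap K L a)) *
      (1 + Matrix.of fun i k => X * C (B i k))).submatrix id g).det ↔
      ∀ f ∈ s, (M.submatrix id f).det ≠ 0 → k ≤ hammingDist f g := by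
  simp only [X_pow_dvd_iff, coeff_det_mul_one_add_X_mul M B hB g]
  constructor
  · intro hcoeff f hf hdet
    by_contra! hlt
    have hsum : ∑ f' with hammingDist f' g = hammingDist f g ∧ f' ∈ s,
        (M.submatrix id f').det • exchangeWeight B g f' = 0 := by
      rw [← hcoeff _ hlt, ← Finset.filter_filter]
      refine Finset.sum_filter_of_ne fun f' _ hne => ?_
      by_contra hf'
      exact hne (by rw [hs' f' hf', smul_zero])
    refine hdet (linearIndepOn_finset_iff.mp (hs.mono fun f' hf' => ?_) _ hsum f ?_)
    · exact (Finset.mem_filter.mp hf').2.2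
    · simp [hf]
  · intro hle l hl
    refine Finset.sum_eq_zero fun f hf => ?_
    by_cases hfs : f ∈ s
    · have hdet : (M.submatrix id f).det = 0 := by
        by_contra hne
        exact hl.not_ge ((Finset.mem_filter.mp hf).2 ▸ hle f hfs hne)
      rw [hdet, zero_smul]
    · rw [hs' f hfs, smul_zero]

end ExchangeWeight

section GenericMatrix

variable {K m : Type*} [Field K] {n : ℕ} {C : Set (Fin n → ℝ)}

/-- The index of the indeterminate `λ_{i,k}`; it keeps `ConeIdx` folded in the types of terms. -/
def ConeIdx.mk {i k : Fin n} (h : i ≠ k ∧ eVec n k - eVec n i ∈ C) : ConeIdx n C :=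
  ⟨(i, k), h⟩

theorem Bmat_apply_self (i : Fin n) : Bmat K n C i i = 0 := by
  simp [Bmat]

theorem Bmat_apply_of_mem {i k : Fin n} (h : i ≠ k ∧ eVec n k - eVec n i ∈ C) :
    Bmat K n C i k = algebraMap (MvPolynomial (ConeIdx n C) K) (LField K n C)
      (MvPolynomial.X (ConeIdx.mk h)) :=
  dif_pos h

/-- The column choices `f` reached from `g` by exchanges `g j ↦ f j` along directions in `C`.
Unexchanged columns are exempt, so that `C` need not contain the origin. -/
def coneExchanges (C : Set (Fin n → ℝ)) (g : m → Fin n) : Set (m → Fin n) :=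
  {f | ∀ j, f j ≠ g j → eVec n (g j) - eVec n (f j) ∈ C}

variable [Fintype m]

theorem exchangeWeight_Bmat_eq_zero {g f : m → Fin n} (h : f ∉ coneExchanges C g) :
    exchangeWeight (Bmat K n C) g f = 0 := by
  obtain ⟨j, hj⟩ := not_forall.mp h
  obtain ⟨hne, hC⟩ := Classical.not_imp.mp hj
  refine Finset.prod_eq_zero (Finset.mem_filter.mpr ⟨Finset.mem_univ j, hne⟩) ?_
  exact dif_neg fun hj => hC hj.2

/-- The exponent vector of the monomial `exchangeWeight (Bmat K n C) g f` in the `λ_{i,k}`. -/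
def exchangeExponent (C : Set (Fin n → ℝ)) (g f : m → Fin n) : ConeIdx n C →₀ ℕ :=
  ∑ j, if h : f j ≠ g j ∧ eVec n (g j) - eVec n (f j) ∈ C then
    Finsupp.single (ConeIdx.mk h) 1 else 0

theorem exchangeWeight_Bmat_eq_monomial {g f : m → Fin n} (h : f ∈ coneExchanges C g) :
    exchangeWeight (Bmat K n C) g f = algebraMap (MvPolynomial (ConeIdx n C) K) (LField K n C)
      (MvPolynomial.monomial (exchangeExponent C g f) 1) := by
  rw [exchangeWeight, Finset.prod_filter, exchangeExponent, MvPolynomial.monomial_sum_one, map_prod]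
  refine Finset.prod_congr rfl fun j _ => ?_
  by_cases hj : f j = g j
  · simp [hj]
  · rw [if_pos hj, dif_pos ⟨hj, h j hj⟩, Bmat_apply_of_mem ⟨hj, h j hj⟩]
    rfl

theorem exchangeExponent_mk_ne_zero_iff (g f : m → Fin n) {i k : Fin n}
    (h : i ≠ k ∧ eVec n k - eVec n i ∈ C) :
    exchangeExponent C g f (ConeIdx.mk h) ≠ 0 ↔ ∃ j, f j = i ∧ g j = k := by
  simp only [exchangeExponent, Finsupp.finsetSum_apply, ne_eq, Finset.sum_eq_zero_iff,
    Finset.mem_univ, true_imp_iff, not_forall]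
  refine exists_congr fun j => ⟨fun hne => ?_, ?_⟩
  · split_ifs at hne with hj
    · have heq := (Finsupp.single_apply_ne_zero.mp hne).1
      exact (Prod.ext_iff.mp (congrArg Subtype.val heq)).imp Eq.symm Eq.symm
    · exact absurd rfl hne
  · rintro ⟨rfl, rfl⟩
    rw [dif_pos h, Finsupp.single_eq_same]
    exact one_ne_zero

theorem injOn_exchangeExponent {g : m → Fin n} (hg : Function.Injective g) :
    Set.InjOn (exchangeExponent C g) (coneExchanges C g) := by
  have hdetermined {f f' : m → Fin n} {j : m} (hf : f ∈ coneExchanges C g)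
      (heq : exchangeExponent C g f = exchangeExponent C g f') (hj : f j ≠ g j) :
      f' j = f j := by
    have hne : exchangeExponent C g f (ConeIdx.mk ⟨hj, hf j hj⟩) ≠ 0 :=
      (exchangeExponent_mk_ne_zero_iff ..).mpr ⟨j, rfl, rfl⟩
    rw [heq, exchangeExponent_mk_ne_zero_iff] at hne
    obtain ⟨j', hf', hgj⟩ := hne
    rwa [hg hgj] at hf'
  intro f hf f' hf' heq
  ext1 j
  by_cases hj : f j = g j
  · by_cases hj' : f' j = g j
    · rw [hj, hj']
    · exact hdetermined hf' heq.symm hj'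
  · exact (hdetermined hf heq hj).symm

theorem linearIndepOn_exchangeWeight_Bmat {g : m → Fin n} (hg : Function.Injective g) :
    LinearIndepOn K (exchangeWeight (Bmat K n C) g) (coneExchanges C g) := by
  have hmonomials := (MvPolynomial.basisMonomials (ConeIdx n C) K).linearIndependent.map_injOn
    (IsScalarTower.toAlgHom K (MvPolynomial (ConeIdx n C) K) (LField K n C)).toLinearMap
    (IsFractionRing.injective _ _).injOn
  have hpowers : LinearIndepOn K (fun f => algebraMap (MvPolynomial (ConeIdx n C) K)
      (LField K n C) (MvPolynomial.monomial (exchangeExponent C g f) 1))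
      (coneExchanges C g) :=
    hmonomials.comp _ (injOn_exchangeExponent hg).injective
  exact hpowers.congr fun f hf => (exchangeWeight_Bmat_eq_monomial hf).symm

theorem X_pow_dvd_det_Nmat_iff {d : ℕ} (M : Matrix (Fin d) (Fin n) K)
    {g : Fin d → Fin n} (hg : Function.Injective g) (k : ℕ) :
    Polynomial.X ^ k ∣ ((Nmat M C).submatrix id g).det ↔
      ∀ f ∈ coneExchanges C g, (M.submatrix id f).det ≠ 0 → k ≤ hammingDist f g :=
  X_pow_dvd_det_mul_one_add_X_mul_iff M (Bmat K n C) Bmat_apply_self g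
    (linearIndepOn_exchangeWeight_Bmat hg) (fun _ => exchangeWeight_Bmat_eq_zero) k

end GenericMatrix

section Matching

variable {m α : Type*} [Fintype m] [DecidableEq α]

theorem card_filter_map_sdiff_map_le {g f : m ↪ α} {p : α → Prop} [DecidablePred p]
    (h : ∀ j, p (g j) → p (f j)) :
    (Finset.filter p (Finset.univ.map g \ Finset.univ.map f)).card ≤
      (Finset.filter p (Finset.univ.map f \ Finset.univ.map g)).card := by
  have hcard : (Finset.filter p (Finset.univ.map g)).card ≤
      (Finset.filter p (Finset.univ.map f)).card := by
    simp only [Finset.filter_map, Finset.card_map]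
    exact Finset.card_le_card (Finset.monotone_filter_right _ fun j _ => h j)
  have hfilter_sdiff (s t : Finset α) : (s \ t).filter p = s.filter p \ t.filter p := by
    ext x
    grind
  rw [hfilter_sdiff, hfilter_sdiff]
  exact Finset.card_sdiff_le_card_sdiff_iff.mpr hcard

theorem exists_equiv_sdiff_of_forall_rel {r : α → α → Prop} [Std.Refl r] [IsTrans α r]
    {g f : m ↪ α} (hgf : ∀ j, r (g j) (f j)) :
    ∃ φ : ↥(Finset.univ.map g \ Finset.univ.map f) ≃ ↥(Finset.univ.map f \ Finset.univ.map g),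
      ∀ k : ↥(Finset.univ.map g \ Finset.univ.map f), r k (φ k) := by
  set z := Finset.univ.map g
  set w := Finset.univ.map f
  -- The elements above `A` form an up-set `U`, so `g j ↦ f j` injects `U ∩ z` into `U ∩ w`.
  have hall (A : Finset ↥(z \ w)) : A.card ≤ (A.biUnion fun a => (w \ z).filter (r a)).card := by
    let U : α → Prop := fun x => ∃ a ∈ A, r a x
    calc
      A.card = (A.map (Function.Embedding.subtype _)).card := (Finset.card_map _).symm
      _ ≤ ((z \ w).filter U).card := by
        refine Finset.card_le_card fun x hx => ?_
        obtain ⟨a, ha, rfl⟩ := Finset.mem_map.mp hx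
        exact Finset.mem_filter.mpr ⟨a.2, a, ha, refl _⟩
      _ ≤ ((w \ z).filter U).card := by
        refine card_filter_map_sdiff_map_le fun j => ?_
        rintro ⟨a, ha, hag⟩
        exact ⟨a, ha, _root_.trans hag (hgf j)⟩
      _ = (A.biUnion fun a => (w \ z).filter (r a)).card := by
        congr 1
        ext x
        simp only [U, Finset.mem_filter, Finset.mem_biUnion]
        tauto
  obtain ⟨φ, hφ, hmem⟩ := (Finset.all_card_le_biUnion_card_iff_exists_injective _).mp hall
  simp only [Finset.mem_filter] at hmem
  let ψ (k : ↥(z \ w)) : ↥(w \ z) := ⟨φ k, (hmem k).1⟩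
  have hψ : Function.Bijective ψ := by
    rw [Fintype.bijective_iff_injective_and_card]
    refine ⟨fun a b hab => hφ (congrArg Subtype.val hab), ?_⟩
    simpa only [Fintype.card_coe] using Finset.card_sdiff_comm (by simp [z, w])
  exact ⟨Equiv.ofBijective ψ hψ, fun k => (hmem k).2⟩

theorem exists_equiv_sdiff_of_sub_mem {E : Type*} [AddCommGroup E] (C : AddSubmonoid E) (v : α → E)
    {g f : m ↪ α} (hgf : ∀ j, f j ≠ g j → v (g j) - v (f j) ∈ C) :
    ∃ φ : ↥(Finset.univ.map g \ Finset.univ.map f) ≃ ↥(Finset.univ.map f \ Finset.univ.map g),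
      ∀ k : ↥(Finset.univ.map g \ Finset.univ.map f), v k - v (φ k) ∈ C := by
  have : Std.Refl fun a b => v a - v b ∈ C := ⟨fun a => by simp⟩
  have : IsTrans α fun a b => v a - v b ∈ C :=
    ⟨fun a b c hab hbc => by simpa using C.add_mem hab hbc⟩
  refine exists_equiv_sdiff_of_forall_rel (r := fun a b => v a - v b ∈ C) fun j => ?_
  by_cases hj : f j = g j
  · simp [hj]
  · exact hgf j hj

theorem card_map_sdiff_map_le_hammingDist (g f : m ↪ α) :
    (Finset.univ.map g \ Finset.univ.map f).card ≤ hammingDist f g := by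
  rw [hammingDist, ← Finset.card_map g]
  refine Finset.card_le_card fun x hx => ?_
  obtain ⟨hxg, hxf⟩ := Finset.mem_sdiff.mp hx
  obtain ⟨j, -, rfl⟩ := Finset.mem_map.mp hxg
  refine Finset.mem_map_of_mem g (Finset.mem_filter.mpr ⟨Finset.mem_univ j, fun hj => hxf ?_⟩)
  exact hj ▸ Finset.mem_map_of_mem f (Finset.mem_univ j)

theorem exists_embedding_of_sdiff_embedding (g : m ↪ α) {w : Finset α}
    (φ : ↥(Finset.univ.map g \ w) ↪ ↥(w \ Finset.univ.map g)) :
    ∃ f : m ↪ α, (∀ j, f j ∈ w) ∧ hammingDist f g = (Finset.univ.map g \ w).card ∧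
      ∀ j, f j ≠ g j → ∃ h : g j ∈ Finset.univ.map g \ w, f j = φ ⟨g j, h⟩ := by
  have hg (j : m) : g j ∈ Finset.univ.map g := Finset.mem_map_of_mem g (Finset.mem_univ j)
  have hφw (k) : (φ k : α) ∈ w := (Finset.mem_sdiff.mp (φ k).2).1
  have hφg (k j) : (φ k : α) ≠ g j := fun h => (Finset.mem_sdiff.mp (φ k).2).2 (h ▸ hg j)
  let f (j : m) : α := if h : g j ∈ w then g j else φ ⟨g j, Finset.mem_sdiff.mpr ⟨hg j, h⟩⟩
  have hf_of_mem {j : m} (h : g j ∈ w) : f j = g j := dif_pos h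
  have hf_of_notMem {j : m} (h : g j ∉ w) :
      f j = φ ⟨g j, Finset.mem_sdiff.mpr ⟨hg j, h⟩⟩ := dif_neg h
  have hf_ne_iff (j : m) : f j ≠ g j ↔ g j ∉ w :=
    ⟨mt hf_of_mem, fun h => hf_of_notMem h ▸ hφg _ _⟩
  have hf : Function.Injective f := by
    intro i j hij
    by_cases hi : g i ∈ w <;> by_cases hj : g j ∈ w
    · rw [hf_of_mem hi, hf_of_mem hj] at hij
      exact g.injective hij
    · rw [hf_of_mem hi, hf_of_notMem hj] at hij
      exact absurd hij.symm (hφg _ _)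
    · rw [hf_of_notMem hi, hf_of_mem hj] at hij
      exact absurd hij (hφg _ _)
    · rw [hf_of_notMem hi, hf_of_notMem hj] at hij
      exact g.injective (congrArg Subtype.val (φ.injective (Subtype.ext hij)))
  refine ⟨⟨f, hf⟩, fun j => ?_, ?_, fun j hj => ⟨_, hf_of_notMem ((hf_ne_iff j).mp hj)⟩⟩
  · change f j ∈ w
    by_cases hj : g j ∈ w
    · rwa [hf_of_mem hj]
    · rw [hf_of_notMem hj]
      exact hφw _
  · rw [hammingDist, ← Finset.card_map g]
    congr 1
    ext x
    simp only [Function.Embedding.coeFn_mk, hf_ne_iff, Finset.mem_map, Finset.mem_filter,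
      Finset.mem_univ, Finset.mem_sdiff, true_and]
    grind

end Matching

theorem IsMatroidalCone.exists_addSubmonoid_coe_eq {n : ℕ} {C : Set (Fin n → ℝ)}
    (hC : IsMatroidalCone C) : ∃ S : AddSubmonoid (Fin n → ℝ), (S : Set (Fin n → ℝ)) = C := by
  obtain ⟨S, -, rfl⟩ := hC
  let cone : AddSubmonoid (Fin n → ℝ) :=
    { carrier := {x | ∃ c : Fin n × Fin n → ℝ, (∀ p, 0 ≤ c p) ∧
        x = ∑ p ∈ S, c p • (eVec n p.1 - eVec n p.2)}
      zero_mem' := ⟨0, by simp, by simp⟩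
      add_mem' := by
        rintro _ _ ⟨c, hc, rfl⟩ ⟨c', hc', rfl⟩
        exact ⟨c + c', fun p => add_nonneg (hc p) (hc' p), by
          simp only [Pi.add_apply, add_smul, Finset.sum_add_distrib]⟩ }
  exact ⟨cone, rfl⟩

theorem ordT_eq_emultiplicity {L : Type*} [Field L] (p : Polynomial L) :
    ordT p = emultiplicity Polynomial.X p := by
  refine le_antisymm (sSup_le ?_) (ENat.forall_natCast_le_iff_le.mp fun k hk => le_sSup ?_)
  · rintro _ ⟨k, rfl, hk⟩
    exact le_emultiplicity_of_pow_dvd hk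
  · exact ⟨k, rfl, pow_dvd_iff_le_emultiplicity.mpr hk⟩

theorem linearIndependent_transpose_comp_iff_det_ne_zero {K m ι : Type*} [Field K] [Fintype m]
    [DecidableEq m] (M : Matrix m ι K) (f : m → ι) :
    LinearIndependent K (fun j => M.transpose (f j)) ↔ (M.submatrix id f).det ≠ 0 := by
  rw [← isUnit_iff_ne_zero, ← Matrix.isUnit_iff_isUnit_det,
    ← Matrix.linearIndependent_cols_iff_isUnit]
  rfl

theorem linearIndependent_coe_map_univ_iff {K V m ι : Type*} [Semiring K] [AddCommMonoid V]
    [Module K V] [Fintype m] (f : m ↪ ι) (v : ι → V) :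
    LinearIndependent K (fun i : ↥(Finset.univ.map f) => v i) ↔
      LinearIndependent K fun j => v (f j) := by
  have hrange : ((Finset.univ.map f : Finset ι) : Set ι) = Set.range f := by simp
  change LinearIndepOn K v ((Finset.univ.map f : Finset ι) : Set ι) ↔ _
  rw [hrange, linearIndepOn_range_iff f.injective]
  rfl

theorem ordT_det_minor_eq_min_matching_general {K : Type*} [Field K] {d n : ℕ}
    (M : Matrix (Fin d) (Fin n) K) (C : AddSubmonoid (Fin n → ℝ))
    {z : Finset (Fin n)} (g : Fin d ↪ Fin n) (hg : Finset.univ.map g = z) :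
    ordT ((Nmat M C).submatrix id g).det =
    sInf {m : ℕ∞ | ∃ w : Finset (Fin n), w.card = d ∧
      LinearIndependent K (fun i : w => M.transpose (i : Fin n)) ∧
      ∃ φ : (z \ w : Finset (Fin n)) ≃ (w \ z : Finset (Fin n)),
        (∀ k : (z \ w : Finset (Fin n)),
          eVec n (k : Fin n) - eVec n ((φ k : Fin n)) ∈ C) ∧
        m = ((z \ w).card : ℕ∞)} := by
  subst hg
  rw [ordT_eq_emultiplicity]
  refine ENat.eq_of_forall_natCast_le_iff fun k => ?_
  rw [← pow_dvd_iff_le_emultiplicity, X_pow_dvd_det_Nmat_iff M g.injective, le_sInf_iff]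
  constructor
  · rintro hle _ ⟨w, -, hw, φ, hφ, rfl⟩
    obtain ⟨f, hfw, hcard, hf⟩ := exists_embedding_of_sdiff_embedding g φ.toEmbedding
    have hli : LinearIndependent K (fun j => M.transpose (f j)) :=
      hw.comp (fun j => ⟨f j, hfw j⟩) fun _ _ hij => f.injective (congrArg Subtype.val hij)
    rw [← hcard, Nat.cast_le]
    refine hle f (fun j hj => ?_) ((linearIndependent_transpose_comp_iff_det_ne_zero M f).mp hli)
    obtain ⟨h, hfj⟩ := hf j hj
    exact hfj ▸ hφ ⟨g j, h⟩
  · intro hle f hf hdet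
    have hli := (linearIndependent_transpose_comp_iff_det_ne_zero M f).mpr hdet
    have hinj : Function.Injective f := hli.injective.of_comp
    obtain ⟨φ, hφ⟩ := exists_equiv_sdiff_of_sub_mem C (eVec n) (f := ⟨f, hinj⟩) hf
    have hw := (linearIndependent_coe_map_univ_iff ⟨f, hinj⟩ M.transpose).mpr hli
    exact Nat.cast_le.mp ((hle _ ⟨_, by simp, hw, φ, hφ, rfl⟩).trans
      (Nat.cast_le.mpr (card_map_sdiff_map_le_hammingDist g ⟨f, hinj⟩)))

/-- The `t`-adic order of the `d × d` minor of `N = M(1 + tB)` on a column set `z` equals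
the minimal number of exchanges `|z ∖ w|` over column bases `w` of `M` admitting a
matching `φ : z ∖ w → w ∖ z` with `e_k − e_{φ(k)} ∈ C`. -/
theorem ordT_det_minor_eq_min_matching {K : Type*} [Field K] {d n : ℕ}
    (M : Matrix (Fin d) (Fin n) K) (hM : M.rank = d)
    (C : Set (Fin n → ℝ)) (hC : IsMatroidalCone C)
    (z : Finset (Fin n)) (hz : z.card = d) :
    ordT ((Nmat M C).submatrix id
        (fun i : Fin d => ((z.orderIsoOfFin hz i : ↥z) : Fin n))).det =
    sInf {m : ℕ∞ | ∃ w : Finset (Fin n), w.card = d ∧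
      LinearIndependent K (fun i : w => M.transpose (i : Fin n)) ∧
      ∃ φ : (z \ w : Finset (Fin n)) ≃ (w \ z : Finset (Fin n)),
        (∀ k : (z \ w : Finset (Fin n)),
          eVec n (k : Fin n) - eVec n ((φ k : Fin n)) ∈ C) ∧
        m = ((z \ w).card : ℕ∞)} := by
  obtain ⟨S, rfl⟩ := hC.exists_addSubmonoid_coe_eq
  exact ordT_det_minor_eq_min_matching_general M S (z.orderEmbOfFin hz).toEmbedding
    (z.map_orderEmbOfFin_univ hz)
end
end

section
/- Let K be a field, let M be a d×n matrix over K of rank d, and let C ⊆ ℝⁿ be a matroidal cone. Let L be the field of rational functions over K in one indeterminate λ_{i,k} for each ordered pair (i,k) with 1 ≤ i,k ≤ n, i ≠ k, and e_k − e_i ∈ C. Let B be the n×n matrix over L with B_{i,k} = λ_{i,k} if i ≠ k and e_k − e_i ∈ C, and B_{i,k} = 0 otherwise, and let N = M·(1ₙ + t·B), a d×n matrix with entries in L[t]. Then for every d-element subset z ⊆ {1,…,n}, det(N^z) ≠ 0 in L[t] if and only if e_z = ∑_{i∈z} eᵢ ∈ P_M + C. Consequently, the rank polytope of N, regarded as a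 matrix over the field of fractions L(t), equals (P_M + C) ∩ Δ_{d,n}. -/
open scoped Classical
open Pointwise

noncomputable section

/-- The rank polytope of a `d × n` matrix over a field `F`: the convex hull of the
indicator vectors `e_B = ∑_{i ∈ B} eᵢ` of the `d`-element column sets `B` whose columns
are linearly independent. -/
def rankPolytope {F : Type*} [Field F] {d n : ℕ} (A : Matrix (Fin d) (Fin n) F) :
    Set (Fin n → ℝ) :=
  convexHull ℝ {x | ∃ B : Finset (Fin n), B.card = d ∧
    LinearIndependent F (fun i : B => A.transpose (i : Fin n)) ∧
    x = ∑ i ∈ B, eVec n i}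

/-- The hypersimplex `Δ_{d,n}`. -/
def hypersimplex (d n : ℕ) : Set (Fin n → ℝ) :=
  {x | (∀ i, 0 ≤ x i ∧ x i ≤ 1) ∧ ∑ i, x i = d}

/-!
By multilinearity, a minor of `N = M (1 + tB)` on the columns `z` is a sum, over maps `f` with
`e_k − e_{f k} ∈ C` for `k ∈ z`, of multiples of the minors of `M` on the columns `f k`. If it is
nonzero then so is one of those minors of `M`, and `e_z = ∑ e_{f k} + ∑ (e_k − e_{f k})` lies in
`P_M + C`.

Conversely, let `x = p + q` with `p ∈ P_M`, `q ∈ C` and `0 ≤ x ≤ 1`. The set `t k` of all `i` with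
`e_k − e_i ∈ C` contains `k`, and a union `T` of such sets is closed under the generators of `C`, so
`q` has nonpositive sum over `T`; hence `x(s) ≤ p(T) ≤ rank_M T` for `T = ⋃_{k ∈ s} t k`. This is
Hall's condition in Rado's theorem, which provides `f` with `f k ∈ t k` such that the columns
`M_{f k}`, `k ∈ U`, have rank at least `x(U)`. Specialising `λ_{i,k}` to `1` if `i = f k` and to `0`
otherwise turns the columns of `N` into `M_k + t M_{f k}` (or `M_k` if `f k = k`), so those of `N`
on `U` have rank at least `x(U)` as well. For `x = e_z` and `U = z` this is independence of the
columns on `z`; for `x ∈ Δ_{d,n}` and all `U` it is Edmonds' description of the polytope `P_N` by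
rank inequalities.
-/

section Rado

variable {ι κ : Type*} [DecidableEq ι] {r : Finset ι → ℕ} {U : Finset κ}
  {t : κ → Finset ι}

lemma forall_card_le_biUnion_update_erase_or (hmono : Monotone r)
    (hsub : ∀ S T, r (S ∪ T) + r (S ∩ T) ≤ r S + r T)
    [DecidableEq κ] (ht : ∀ s ⊆ U, s.card ≤ r (s.biUnion t)) (k : κ) {x y : ι} (hxy : x ≠ y) :
    (∀ s ⊆ U, s.card ≤ r (s.biUnion (Function.update t k ((t k).erase x)))) ∨
      ∀ s ⊆ U, s.card ≤ r (s.biUnion (Function.update t k ((t k).erase y))) := by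
  -- Two violators of Hall's condition, one for each erasure, are uncrossed by submodularity.
  by_contra! h
  obtain ⟨⟨s₁, hs₁, h₁⟩, s₂, hs₂, h₂⟩ := h
  have mem_of_lt : ∀ {s : Finset κ} {z : ι}, s ⊆ U →
      r (s.biUnion (Function.update t k ((t k).erase z))) < s.card → k ∈ s := by
    intro s z hs hlt
    by_contra hk
    have hcongr : s.biUnion (Function.update t k ((t k).erase z)) = s.biUnion t :=
      Finset.biUnion_congr rfl fun j hj => Function.update_of_ne (by grind) _ _
    grind
  have hk₁ := mem_of_lt hs₁ h₁
  have hk₂ := mem_of_lt hs₂ h₂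
  set S := s₁.biUnion (Function.update t k ((t k).erase x)) with hS
  set T := s₂.biUnion (Function.update t k ((t k).erase y)) with hT
  have hunion : (s₁ ∪ s₂).biUnion t ⊆ S ∪ T := by
    intro i hi
    simp only [hS, hT, Finset.mem_union, Finset.mem_biUnion, Function.update_apply] at hi ⊢
    grind
  have hinter : ((s₁ ∩ s₂).erase k).biUnion t ⊆ S ∩ T := by
    intro i hi
    simp only [hS, hT, Finset.mem_inter, Finset.mem_biUnion, Function.update_apply] at hi ⊢
    grind
  have hcard_union := (ht _ (Finset.union_subset hs₁ hs₂)).trans (hmono hunion)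
  have hcard_inter := (ht ((s₁ ∩ s₂).erase k) (by grind)).trans (hmono hinter)
  have hcard_erase := Finset.card_erase_add_one (Finset.mem_inter.2 ⟨hk₁, hk₂⟩)
  have hcard := Finset.card_union_add_card_inter s₁ s₂
  have := hsub S T
  omega

/-- **Rado's theorem** for a monotone submodular function. -/
theorem exists_transversal_card_le_image [Finite κ] (hmono : Monotone r)
    (hsub : ∀ S T, r (S ∪ T) + r (S ∩ T) ≤ r S + r T) (hne : ∀ k, (t k).Nonempty)
    (ht : ∀ s ⊆ U, s.card ≤ r (s.biUnion t)) :
    ∃ f : κ → ι, (∀ k, f k ∈ t k) ∧ ∀ s ⊆ U, s.card ≤ r (s.image f) := by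
  obtain ⟨m, hmt, hm⟩ := exists_minimal_le_of_wellFoundedLT
    (fun m : κ → Finset ι => (∀ k, (m k).Nonempty) ∧ ∀ s ⊆ U, s.card ≤ r (s.biUnion m))
    t ⟨hne, ht⟩
  have not_erase : ∀ k, ∀ z ∈ m k, (m k).Nontrivial →
      ¬ ∀ s ⊆ U, s.card ≤ r (s.biUnion (Function.update m k ((m k).erase z))) := by
    intro k z hz hk hcard
    have hle := hm.le_of_le (y := Function.update m k ((m k).erase z))
      ⟨fun j => ?_, hcard⟩ (update_le_self_iff.2 (Finset.erase_subset _ _)) k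
    · rw [Function.update_self] at hle
      exact Finset.notMem_erase z _ (hle hz)
    · obtain rfl | hj := eq_or_ne j k
      · simpa using hk.erase_nonempty
      · simpa [hj] using hm.prop.1 j
  have hsingle : ∀ k, ∃ i, m k = {i} := by
    intro k
    refine (hm.prop.1 k).exists_eq_singleton_or_nontrivial.resolve_right fun hk => ?_
    obtain ⟨x, hx, y, hy, hxy⟩ := id hk
    exact (forall_card_le_biUnion_update_erase_or hmono hsub hm.prop.2 k hxy).elim
      (not_erase k x hx hk) (not_erase k y hy hk)
  choose f hf using hsingle
  refine ⟨f, fun k => hmt k (by simp [hf]), fun s hs => ?_⟩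
  have := hm.prop.2 s hs
  rwa [funext hf, Finset.biUnion_singleton] at this

end Rado

section VectorRank

variable {K V ι : Type*} [Field K] [AddCommGroup V] [Module K V]

lemma finrank_image_eq_card {v : ι → V} {s : Set ι} {z : Finset ι} (hz : LinearIndepOn K v z)
    (hzs : (z : Set ι) ⊆ s) (hs : v '' s ⊆ Submodule.span K (v '' z)) :
    (v '' s).finrank K = z.card := by
  have hspan : Submodule.span K (v '' s) = Submodule.span K (v '' z) :=
    (Submodule.span_le.2 hs).antisymm (Submodule.span_mono (Set.image_mono hzs))
  rw [Set.finrank, hspan, Set.image_eq_range]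
  simpa using finrank_span_eq_card hz

lemma finrank_image_eq_card_of_linearIndepOn {v : ι → V} {z : Finset ι}
    (hz : LinearIndepOn K v z) : (v '' z).finrank K = z.card :=
  finrank_image_eq_card hz subset_rfl Submodule.subset_span

lemma linearIndepOn_of_card_le_finrank_image {v : ι → V} {z : Finset ι}
    (hz : z.card ≤ (v '' z).finrank K) : LinearIndepOn K v z := by
  rw [LinearIndepOn, linearIndependent_iff_card_le_finrank_span, ← Set.image_eq_range]
  simpa using hz

lemma exists_linearIndepOn_card_eq_finrank_image (v : ι → V) (s : Finset ι) :
    ∃ z ⊆ s, LinearIndepOn K v z ∧ z.card = (v '' s).finrank K := by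
  obtain ⟨z, hzs, -, hspan, hz⟩ :=
    exists_linearIndepOn_extension (linearIndepOn_empty K v) (Set.empty_subset (s : Set ι))
  lift z to Finset ι using s.finite_toSet.subset hzs
  exact ⟨z, mod_cast hzs, hz, (finrank_image_eq_card hz hzs hspan).symm⟩

-- The greedy algorithm; lowering the baseline `c` is Abel summation of the rank inequalities `hx`.
lemma exists_linearIndepOn_sum_mul_le {v : ι → V} {x : ι → ℝ}
    (hx : ∀ U : Finset ι, ∑ i ∈ U, x i ≤ (v '' U).finrank K) (w : ι → ℝ) (s : Finset ι) :
    ∃ z ⊆ s, LinearIndepOn K v z ∧ v '' s ⊆ Submodule.span K (v '' z) ∧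
      ∀ c, (∀ i ∈ s, c ≤ w i) → ∑ i ∈ s, (w i - c) * x i ≤ ∑ i ∈ z, (w i - c) := by
  induction s using Finset.induction_on_min_value w with
  | empty => exact ⟨∅, by simp⟩
  | insert a s has hmin ih =>
    obtain ⟨z, hzs, hz, hspan, hsum⟩ := ih
    obtain ⟨z', hz'a, hzz', hspan', hz'⟩ :=
      exists_linearIndepOn_extension hz (Set.subset_insert a (z : Set ι))
    lift z' to Finset ι using (z.finite_toSet.insert a).subset hz'a
    have hz's : z' ⊆ insert a s := by
      have : z' ⊆ insert a z := mod_cast hz'a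
      exact this.trans (Finset.insert_subset_insert a hzs)
    have hspan_insert : v '' ↑(insert a s) ⊆ Submodule.span K (v '' z') := by
      rw [Finset.coe_insert, Set.image_insert_eq, Set.insert_subset_iff]
      exact ⟨hspan' ⟨a, by simp, rfl⟩,
        hspan.trans (Submodule.span_mono (Set.image_mono hzz'))⟩
    refine ⟨z', hz's, hz', hspan_insert, fun c hc => ?_⟩
    have hrank := hx (insert a s)
    rw [finrank_image_eq_card hz' (mod_cast hz's) hspan_insert] at hrank
    have hz'_sum : ∑ i ∈ z, (w i - w a) = ∑ i ∈ z', (w i - w a) := by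
      refine Finset.sum_subset (mod_cast hzz') fun i hi hiz => ?_
      rw [(hz'a hi).resolve_right hiz, sub_self]
    calc ∑ i ∈ insert a s, (w i - c) * x i
        = ∑ i ∈ s, (w i - w a) * x i + (w a - c) * ∑ i ∈ insert a s, x i := by
          simp only [Finset.sum_insert has, sub_mul, Finset.sum_sub_distrib, ← Finset.mul_sum]
          ring
      _ ≤ ∑ i ∈ z', (w i - w a) + (w a - c) * z'.card :=
          add_le_add ((hsum _ hmin).trans_eq hz'_sum) <|
            mul_le_mul_of_nonneg_left hrank (sub_nonneg.2 (hc a (Finset.mem_insert_self a s)))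
      _ = ∑ i ∈ z', (w i - c) := by
          simp only [Finset.sum_sub_distrib, Finset.sum_const, nsmul_eq_mul]
          ring

variable [FiniteDimensional K V]

lemma finrank_image_mono (v : ι → V) {s t : Set ι} (h : s ⊆ t) :
    (v '' s).finrank K ≤ (v '' t).finrank K :=
  Submodule.finrank_mono (Submodule.span_mono (Set.image_mono h))

lemma finrank_image_union_add_finrank_image_inter_le (v : ι → V) (s t : Set ι) :
    (v '' (s ∪ t)).finrank K + (v '' (s ∩ t)).finrank K ≤
      (v '' s).finrank K + (v '' t).finrank K := by
  have hunion : (v '' (s ∪ t)).finrank K =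
      Module.finrank K ↥(Submodule.span K (v '' s) ⊔ Submodule.span K (v '' t)) := by
    rw [Set.finrank, Set.image_union, Submodule.span_union]
  have hinter : (v '' (s ∩ t)).finrank K ≤
      Module.finrank K ↥(Submodule.span K (v '' s) ⊓ Submodule.span K (v '' t)) :=
    Submodule.finrank_mono (le_inf (Submodule.span_mono (Set.image_mono Set.inter_subset_left))
      (Submodule.span_mono (Set.image_mono Set.inter_subset_right)))
  rw [hunion]
  exact (Nat.add_le_add_left hinter _).trans_eq (Submodule.finrank_sup_add_finrank_inf_eq _ _)

lemma exists_transversal_le_finrank_image {κ : Type*} [Finite κ] [DecidableEq κ] [DecidableEq ι]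
    (v : ι → V) {t : κ → Finset ι} {U : Finset κ} {m : ℕ} (hne : ∀ k, (t k).Nonempty)
    (ht : ∀ s ⊆ U, m ≤ (v '' (s.biUnion t : Finset ι)).finrank K + (U \ s).card) :
    ∃ f : κ → ι, (∀ k, f k ∈ t k) ∧ m ≤ ((v ∘ f) '' U).finrank K := by
  have hm : m ≤ U.card := by
    have := ht ∅ (Finset.empty_subset U)
    rwa [Finset.biUnion_empty, Finset.coe_empty, Set.image_empty, Set.finrank_empty, zero_add,
      Finset.sdiff_empty] at this
  obtain ⟨f, hf, hfU⟩ := exists_transversal_card_le_image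
    (r := fun s => (v '' s).finrank K + (U.card - m)) (U := U)
    (fun s s' h => Nat.add_le_add_right (finrank_image_mono v (mod_cast h)) _)
    (fun s s' => by
      have := finrank_image_union_add_finrank_image_inter_le (K := K) v s s'
      push_cast
      omega)
    hne fun s hs => by
      have := ht s hs
      have := Finset.card_sdiff_add_card_eq_card hs
      omega
  have := hfU U subset_rfl
  rw [Finset.coe_image, ← Set.image_comp] at this
  exact ⟨f, hf, by omega⟩

end VectorRank

section RankPolytope

variable {F : Type*} [Field F] {d n : ℕ} {A : Matrix (Fin d) (Fin n) F} {x : Fin n → ℝ}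

lemma sum_eVec_apply (B : Finset (Fin n)) (j : Fin n) :
    (∑ i ∈ B, eVec n i) j = if j ∈ B then 1 else 0 := by
  simp [eVec, Pi.single_apply]

lemma sum_smul_eVec (x : Fin n → ℝ) : ∑ i, x i • eVec n i = x := by
  ext j
  simp [eVec, Pi.single_apply]

lemma sum_eVec_mem_rankPolytope {B : Finset (Fin n)} (hB : B.card = d)
    (h : LinearIndepOn F A.col B) : ∑ i ∈ B, eVec n i ∈ rankPolytope A :=
  subset_convexHull ℝ _ ⟨B, hB, h, rfl⟩

lemma rankPolytope_subset {P : Set (Fin n → ℝ)} (hP : Convex ℝ P)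
    (h : ∀ B : Finset (Fin n), B.card = d → LinearIndepOn F A.col B → ∑ i ∈ B, eVec n i ∈ P) :
    rankPolytope A ⊆ P :=
  convexHull_min (by rintro _ ⟨B, hB, hA, rfl⟩; exact h B hB hA) hP

lemma isClosed_rankPolytope (A : Matrix (Fin d) (Fin n) F) : IsClosed (rankPolytope A) := by
  refine Set.Finite.isClosed_convexHull ℝ
    ((Set.finite_range fun B : Finset (Fin n) => ∑ i ∈ B, eVec n i).subset ?_)
  rintro _ ⟨B, -, -, rfl⟩
  exact ⟨B, rfl⟩

lemma sum_le_finrank_of_mem_rankPolytope (hx : x ∈ rankPolytope A) (U : Finset (Fin n)) :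
    ∑ i ∈ U, x i ≤ (A.col '' U).finrank F := by
  have hconvex : Convex ℝ {x : Fin n → ℝ | ∑ i ∈ U, x i ≤ (A.col '' U).finrank F} :=
    convex_halfSpace_le ⟨fun x y => by simp [Finset.sum_add_distrib],
      fun c x => by simp [Finset.mul_sum]⟩ _
  refine rankPolytope_subset hconvex (fun B _ hB => ?_) hx
  have hUB : LinearIndepOn F A.col ↑(U ∩ B) := hB.mono (mod_cast Finset.inter_subset_right)
  have hcard : (U ∩ B).card ≤ (A.col '' U).finrank F := by
    rw [← finrank_image_eq_card_of_linearIndepOn hUB]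
    exact finrank_image_mono _ (mod_cast Finset.inter_subset_left)
  simp only [Set.mem_ofPred_eq, sum_eVec_apply, Finset.sum_ite_mem, Finset.sum_const,
    nsmul_eq_mul, mul_one]
  exact_mod_cast hcard

/-- **Edmonds' theorem** on matroid base polytopes, for the matroid of columns of `A`. -/
theorem mem_rankPolytope_of_sum_le_finrank
    (hx : ∀ U : Finset (Fin n), ∑ i ∈ U, x i ≤ (A.col '' U).finrank F) (hd : ∑ i, x i = d) :
    x ∈ rankPolytope A := by
  by_contra hxA
  obtain ⟨φ, u, hφ, hφx⟩ := geometric_hahn_banach_closed_point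
    (convex_convexHull ℝ _) (isClosed_rankPolytope A) hxA
  obtain ⟨z, -, hz, hspan, hsum⟩ :=
    exists_linearIndepOn_sum_mul_le hx (fun i => φ (eVec n i)) Finset.univ
  have hzd : z.card = d := by
    rw [← finrank_image_eq_card hz (mod_cast z.subset_univ) hspan]
    refine le_antisymm ((Submodule.finrank_le _).trans_eq (by simp)) ?_
    exact_mod_cast hd.symm.trans_le (hx Finset.univ)
  obtain ⟨c, hc⟩ := (Set.finite_range fun i => φ (eVec n i)).bddBelow
  have hφz := hφ _ (sum_eVec_mem_rankPolytope hzd hz)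
  have hφ_sum : ∑ i, φ (eVec n i) * x i = φ x := by
    conv_rhs => rw [← sum_smul_eVec x, map_sum]
    exact Finset.sum_congr rfl fun i _ => by rw [map_smul, smul_eq_mul, mul_comm]
  have hle := hsum c fun i _ => hc ⟨i, rfl⟩
  simp only [sub_mul, Finset.sum_sub_distrib, ← Finset.mul_sum, hd, hφ_sum, Finset.sum_const,
    hzd, nsmul_eq_mul, ← map_sum] at hle
  linarith

lemma sum_eVec_mem_hypersimplex {B : Finset (Fin n)} (hB : B.card = d) :
    ∑ i ∈ B, eVec n i ∈ hypersimplex d n := by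
  refine ⟨fun i => ?_, ?_⟩
  · rw [sum_eVec_apply]
    split_ifs <;> norm_num
  · simp only [sum_eVec_apply]
    simp [hB]

lemma convex_hypersimplex (d n : ℕ) : Convex ℝ (hypersimplex d n) := by
  have hsum : Convex ℝ {x : Fin n → ℝ | ∑ i, x i = d} :=
    convex_hyperplane ⟨fun x y => by simp [Finset.sum_add_distrib],
      fun c x => by simp [Finset.mul_sum]⟩ _
  have hinter : hypersimplex d n = Set.Icc 0 1 ∩ {x : Fin n → ℝ | ∑ i, x i = d} := by
    ext x
    simp [hypersimplex, Pi.le_def, forall_and]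
  exact hinter ▸ (convex_Icc 0 1).inter hsum

end RankPolytope

section RootCone

variable {n : ℕ} {S : Set (Fin n × Fin n)}

/-- The convex cone generated by the roots `eᵢ − eⱼ` with `(i, j) ∈ S`; matroidal cones are those
with `S` finite and off the diagonal. -/
def rootCone (S : Set (Fin n × Fin n)) : PointedCone ℝ (Fin n → ℝ) :=
  PointedCone.hull ℝ ((fun p => eVec n p.1 - eVec n p.2) '' S)

lemma IsMatroidalCone.exists_rootCone_eq {C : Set (Fin n → ℝ)} (hC : IsMatroidalCone C) :
    ∃ S : Set (Fin n × Fin n), (rootCone S : Set (Fin n → ℝ)) = C := by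
  obtain ⟨S, -, rfl⟩ := hC
  refine ⟨S, ?_⟩
  ext x
  simp only [rootCone, PointedCone.hull, SetLike.mem_coe,
    Submodule.mem_span_image_finset_iff_exists_fun', Set.mem_ofPred_eq]
  constructor
  · rintro ⟨c, rfl⟩
    exact ⟨fun p => c p, fun p => (c p).2, rfl⟩
  · rintro ⟨c, hc, rfl⟩
    exact ⟨fun p => ⟨c p, hc p⟩, rfl⟩

lemma sum_nonpos_of_mem_rootCone {U : Finset (Fin n)} (hU : ∀ p ∈ S, p.1 ∈ U → p.2 ∈ U)
    {x : Fin n → ℝ} (hx : x ∈ rootCone S) : ∑ i ∈ U, x i ≤ 0 := by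
  induction hx using Submodule.span_induction with
  | mem x hx =>
    obtain ⟨p, hp, rfl⟩ := hx
    have := hU p hp
    simp only [eVec, Pi.sub_apply, Finset.sum_sub_distrib, Pi.single_apply, Finset.sum_ite_eq']
    split_ifs <;> grind
  | zero => simp
  | add x y _ _ hx hy => simpa [Finset.sum_add_distrib] using add_nonpos hx hy
  | smul c x _ hx =>
    have hc : ∑ i ∈ U, (c • x) i = (c : ℝ) * ∑ i ∈ U, x i := (Finset.mul_sum _ _ _).symm
    exact hc ▸ mul_nonpos_of_nonneg_of_nonpos c.2 hx

variable {K V : Type*} [Field K] [AddCommGroup V] [Module K V] [FiniteDimensional K V]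
  {v : Fin n → V} {p q : Fin n → ℝ}

lemma exists_transversal_sum_le_finrank_image
    (hp : ∀ U : Finset (Fin n), ∑ i ∈ U, p i ≤ (v '' U).finrank K) (hq : q ∈ rootCone S)
    (h01 : ∀ i, 0 ≤ (p + q) i ∧ (p + q) i ≤ 1) (U : Finset (Fin n)) :
    ∃ f : Fin n → Fin n, (∀ k, eVec n k - eVec n (f k) ∈ rootCone S) ∧
      ∑ i ∈ U, (p + q) i ≤ ((v ∘ f) '' U).finrank K := by
  let t : Fin n → Finset (Fin n) := fun k => {i | eVec n k - eVec n i ∈ rootCone S}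
  have mem_t {k i} : i ∈ t k ↔ eVec n k - eVec n i ∈ rootCone S := Finset.mem_filter_univ i
  have self_mem (k) : k ∈ t k := mem_t.2 (by simp)
  have biUnion_closed (s : Finset (Fin n)) : ∀ a ∈ S, a.1 ∈ s.biUnion t → a.2 ∈ s.biUnion t := by
    intro a ha h
    obtain ⟨k, hk, hka⟩ := Finset.mem_biUnion.1 h
    have haS : eVec n a.1 - eVec n a.2 ∈ rootCone S := Submodule.subset_span ⟨a, ha, rfl⟩
    exact Finset.mem_biUnion.2 ⟨k, hk, mem_t.2 (by simpa using add_mem (mem_t.1 hka) haS)⟩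
  have sum_le_finrank (s : Finset (Fin n)) :
      ∑ i ∈ s, (p + q) i ≤ (v '' (s.biUnion t : Finset (Fin n))).finrank K :=
    calc ∑ i ∈ s, (p + q) i
        ≤ ∑ i ∈ s.biUnion t, (p + q) i :=
          Finset.sum_le_sum_of_subset_of_nonneg
            (fun k hk => Finset.mem_biUnion.2 ⟨k, hk, self_mem k⟩) fun i _ _ => (h01 i).1
      _ = ∑ i ∈ s.biUnion t, p i + ∑ i ∈ s.biUnion t, q i := Finset.sum_add_distrib
      _ ≤ ∑ i ∈ s.biUnion t, p i :=
          add_le_of_nonpos_right (sum_nonpos_of_mem_rootCone (biUnion_closed s) hq)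
      _ ≤ _ := hp _
  obtain ⟨f, hf, hfU⟩ := exists_transversal_le_finrank_image (m := ⌈∑ i ∈ U, (p + q) i⌉₊) v
    (fun k => ⟨k, self_mem k⟩) fun s hs => by
      have hrest : ∑ i ∈ U \ s, (p + q) i ≤ (U \ s).card := by
        simpa using Finset.sum_le_card_nsmul (U \ s) _ 1 fun i _ => (h01 i).2
      rw [Nat.ceil_le, Nat.cast_add, ← Finset.sum_sdiff hs, add_comm]
      exact add_le_add (sum_le_finrank s) hrest
  exact ⟨f, fun k => mem_t.1 (hf k), Nat.ceil_le.1 hfU⟩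

end RootCone

section Minors

open Polynomial

lemma exists_mul_eq_one_of_linearIndependent_col {F m n : Type*} [Field F] [Finite m]
    [DecidableEq m] [Fintype n] {A : Matrix n m F} (h : LinearIndependent F A.col) :
    ∃ G : Matrix m n F, G * A = 1 := by
  have := Fintype.ofFinite m
  obtain ⟨g, hg⟩ := (Matrix.toLin' A).exists_leftInverse_of_injective
    (LinearMap.ker_eq_bot.2 (Matrix.mulVec_injective_iff.2 h))
  refine ⟨LinearMap.toMatrix' g, ?_⟩
  rw [← LinearMap.toMatrix'_toLin' A, ← LinearMap.toMatrix'_comp, hg, LinearMap.toMatrix'_id]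

variable {R S F m n : Type*} [CommRing R] [CommRing S] [Field F] [Fintype m] [DecidableEq m]

lemma det_mul_eq_sum [Fintype n] (A : Matrix m n R) (B : Matrix n m R) :
    (A * B).det = ∑ f : m → n, (∏ k, B (f k) k) * (A.submatrix id f).det := by
  rw [← Matrix.det_transpose]
  have hrow : (A * B).transpose = fun k => ∑ i, B i k • A.transpose i := by
    ext k a
    simp [Matrix.mul_apply, mul_comm]
  rw [hrow]
  refine (Matrix.detRowAlternating.toMultilinearMap.map_sum _).trans
    (Finset.sum_congr rfl fun f _ => ?_)
  rw [MultilinearMap.map_smul_univ, smul_eq_mul, ← Matrix.det_transpose (A.submatrix id f)]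
  rfl

lemma exists_det_submatrix_ne_zero_of_det_mul_ne_zero [Fintype n] {A : Matrix m n R}
    {B : Matrix n m R} (h : (A * B).det ≠ 0) :
    ∃ f : m → n, (∀ k, B (f k) k ≠ 0) ∧ (A.submatrix id f).det ≠ 0 := by
  rw [det_mul_eq_sum] at h
  obtain ⟨f, -, hf⟩ := Finset.exists_ne_zero_of_sum_ne_zero h
  refine ⟨f, fun k hk => left_ne_zero_of_mul hf ?_, right_ne_zero_of_mul hf⟩
  exact Finset.prod_eq_zero (Finset.mem_univ k) hk

lemma linearIndependent_col_map_of_det_mul_ne_zero [Fintype n] {G : Matrix m n R}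
    {A : Matrix n m R} {ψ : R →+* F} (hψ : Function.Injective ψ) (h : (G * A).det ≠ 0) :
    LinearIndependent F (A.map ψ).col := by
  have hdet : (G.map ψ * A.map ψ).det ≠ 0 := by
    rw [← Matrix.map_mul, ← RingHom.mapMatrix_apply, ← RingHom.map_det]
    exact (map_ne_zero_iff ψ hψ).2 h
  exact (Matrix.linearIndependent_cols_of_det_ne_zero hdet).of_comp (G.map ψ).mulVecLin

lemma det_ne_zero_of_det_map_ne_zero {A : Matrix m m R} (ε : R →+* S) (h : (A.map ε).det ≠ 0) :
    A.det ≠ 0 := by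
  rintro hA
  rw [← RingHom.mapMatrix_apply, ← RingHom.map_det, hA, map_zero] at h
  exact h rfl

lemma det_submatrix_ne_zero_iff_linearIndepOn {ψ : R →+* F} (hψ : Function.Injective ψ)
    (A : Matrix m n R) {z : Finset n} (e : m ≃ z) :
    (A.submatrix id fun k => (e k : n)).det ≠ 0 ↔ LinearIndepOn F (A.map ψ).col z := by
  have hmap : ((A.map ψ).submatrix id fun k => (e k : n)).det =
      ψ (A.submatrix id fun k => (e k : n)).det :=
    (ψ.map_det _).symm
  rw [LinearIndepOn, ← linearIndependent_equiv e, ← map_ne_zero_iff ψ hψ, ← hmap,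
    ← isUnit_iff_ne_zero, ← Matrix.isUnit_iff_isUnit_det,
    ← Matrix.linearIndependent_cols_iff_isUnit]
  rfl

lemma det_map_C_add_X_smul_ne_zero {A B : Matrix m m R} (hB : B.det ≠ 0) :
    (A.map C + (X : R[X]) • B.map C).det ≠ 0 := by
  intro h
  have hcoeff := coeff_det_X_add_C_card B A
  rw [add_comm, h, coeff_zero] at hcoeff
  exact hB hcoeff.symm

end Minors

section Perturbation

open Polynomial

variable {R S m n l : Type*} [CommRing R] [CommRing S] [Fintype n] [DecidableEq n]

/-- The matrix `A (1 + tB)` over the polynomial ring in `t`. -/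
def perturb (A : Matrix m n R) (B : Matrix n n R) : Matrix m n R[X] :=
  A.map C * (1 + (X : R[X]) • B.map C)

lemma perturb_eq (A : Matrix m n R) (B : Matrix n n R) :
    perturb A B = A.map C + (X : R[X]) • (A * B).map C := by
  rw [perturb, Matrix.mul_add, Matrix.mul_one, Matrix.mul_smul, ← Matrix.map_mul]

lemma map_perturb (A : Matrix m n R) (B : Matrix n n R) (φ : R →+* S) :
    (perturb A B).map (mapRingHom φ) = perturb (A.map φ) (B.map φ) := by
  rw [perturb_eq, perturb_eq, ← Matrix.map_mul]
  ext1 i k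
  simp only [Matrix.map_apply, Matrix.add_apply, Matrix.smul_apply, smul_eq_mul,
    coe_mapRingHom, Polynomial.map_add, Polynomial.map_mul, map_C, map_X]

lemma map_C_mul_perturb [Fintype m] (G : Matrix l m R) (A : Matrix m n R) (B : Matrix n n R) :
    G.map C * perturb A B = perturb (G * A) B := by
  rw [perturb, ← Matrix.mul_assoc, ← Matrix.map_mul, perturb]

/-- The 0-1 matrix with an entry `1` at `(f k, k)` for each `k` not fixed by `f`. -/
def arrowMatrix (R : Type*) [CommRing R] (f : n → n) : Matrix n n R :=
  Matrix.of fun i k => if i = f k ∧ i ≠ k then 1 else 0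

lemma perturb_arrowMatrix_mul (A : Matrix m n R) (f : n → n) (i : m) (k : n) :
    perturb A (arrowMatrix R f) i k * (if f k = k then 1 + X else 1) =
      C (A i k) + X * C (A i (f k)) := by
  have hentry : (A * arrowMatrix R f) i k = if f k = k then 0 else A i (f k) := by
    simp [arrowMatrix, Matrix.mul_apply, ite_and]
  rw [perturb_eq]
  simp only [Matrix.add_apply, Matrix.smul_apply, Matrix.map_apply, hentry, smul_eq_mul]
  split_ifs with h
  · rw [h, C_0]
    ring
  · ring

lemma det_perturb_arrowMatrix_ne_zero [Fintype m] [DecidableEq m] {A : Matrix m n R} {f : n → n}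
    {c : m → n} (h : (A.submatrix id (f ∘ c)).det ≠ 0) :
    ((perturb A (arrowMatrix R f)).submatrix id c).det ≠ 0 := by
  -- Scaling the columns fixed by `f` by `1 + X` gives every column the form `A_k + X A_{f k}`.
  have hmul : (perturb A (arrowMatrix R f)).submatrix id c *
        Matrix.diagonal (fun k => if f (c k) = c k then 1 + X else 1) =
      (A.submatrix id c).map C + (X : R[X]) • (A.submatrix id (f ∘ c)).map C := by
    ext1 i k
    rw [Matrix.mul_diagonal]
    exact perturb_arrowMatrix_mul A f i (c k)
  have hdet := det_map_C_add_X_smul_ne_zero (A := A.submatrix id c) h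
  rw [← hmul, Matrix.det_mul] at hdet
  exact left_ne_zero_of_mul hdet

end Perturbation

section ConePerturbation

variable {K : Type*} [Field K] {d n : ℕ} {M : Matrix (Fin d) (Fin n) K}

/-- The matrix `B` of indeterminates, over the polynomial ring instead of its field of fractions so
that the indeterminates can be specialised. -/
def coneMatrix (K : Type*) [Field K] (n : ℕ) (C : Set (Fin n → ℝ)) :
    Matrix (Fin n) (Fin n) (MvPolynomial (ConeIdx n C) K) :=
  Matrix.of fun i k =>
    if h : i ≠ k ∧ eVec n k - eVec n i ∈ C then MvPolynomial.X ⟨(i, k), h⟩ else 0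

lemma Bmat_eq_map_coneMatrix (K : Type*) [Field K] (n : ℕ) (C : Set (Fin n → ℝ)) :
    Bmat K n C = (coneMatrix K n C).map (algebraMap _ (LField K n C)) := by
  ext1 i k
  simp only [Bmat, coneMatrix, Matrix.of_apply, Matrix.map_apply]
  split_ifs <;> simp

lemma Nmat_eq_perturb (M : Matrix (Fin d) (Fin n) K) (C : Set (Fin n → ℝ)) :
    Nmat M C = perturb (M.map ((algebraMap (MvPolynomial (ConeIdx n C) K) (LField K n C)).comp
      MvPolynomial.C)) (Bmat K n C) :=
  rfl

lemma Nmat_eq_map_perturb (M : Matrix (Fin d) (Fin n) K) (C : Set (Fin n → ℝ)) :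
    Nmat M C = (perturb (M.map MvPolynomial.C) (coneMatrix K n C)).map
      (Polynomial.mapRingHom (algebraMap _ (LField K n C))) := by
  rw [map_perturb, ← Bmat_eq_map_coneMatrix, Nmat_eq_perturb]
  rfl

lemma map_eval_coneMatrix {C : Set (Fin n → ℝ)} {f : Fin n → Fin n}
    (hf : ∀ k, eVec n k - eVec n (f k) ∈ C) :
    (coneMatrix K n C).map (MvPolynomial.eval fun p => if p.1.1 = f p.1.2 then 1 else 0) =
      arrowMatrix K f := by
  ext1 i k
  simp only [coneMatrix, arrowMatrix, Matrix.map_apply, Matrix.of_apply]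
  split_ifs with h h' h'
  · exact (MvPolynomial.eval_X _).trans (if_pos h'.1)
  · exact (MvPolynomial.eval_X _).trans (if_neg fun hi => h' ⟨hi, h.1⟩)
  · exact absurd ⟨h'.2, h'.1 ▸ hf k⟩ h
  · exact map_zero _

lemma det_perturb_coneMatrix_ne_zero {m : Type*} [Fintype m] [DecidableEq m]
    {A : Matrix m (Fin n) K} {C : Set (Fin n → ℝ)} {f : Fin n → Fin n}
    (hf : ∀ k, eVec n k - eVec n (f k) ∈ C) {c : m → Fin n}
    (h : (A.submatrix id (f ∘ c)).det ≠ 0) :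
    ((perturb (A.map MvPolynomial.C) (coneMatrix K n C)).submatrix id c).det ≠ 0 := by
  let ev : MvPolynomial (ConeIdx n C) K →+* K :=
    MvPolynomial.eval fun p => if p.1.1 = f p.1.2 then 1 else 0
  have hA : (A.map MvPolynomial.C).map ev = A := by
    ext1 i k
    exact MvPolynomial.eval_C _
  refine det_ne_zero_of_det_map_ne_zero (Polynomial.mapRingHom ev) ?_
  rw [← Matrix.submatrix_map, map_perturb, hA, map_eval_coneMatrix hf]
  exact det_perturb_arrowMatrix_ne_zero h

lemma linearIndepOn_col_map_Nmat {F : Type*} [Field F] {C : Set (Fin n → ℝ)}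
    {ψ : Polynomial (LField K n C) →+* F} (hψ : Function.Injective ψ) {f : Fin n → Fin n}
    (hf : ∀ k, eVec n k - eVec n (f k) ∈ C) {z : Finset (Fin n)}
    (hz : LinearIndepOn K (M.col ∘ f) z) : LinearIndepOn F ((Nmat M C).map ψ).col z := by
  let c : z → Fin n := Subtype.val
  obtain ⟨G, hG⟩ := exists_mul_eq_one_of_linearIndependent_col (A := M.submatrix id (f ∘ c)) hz
  have hGM : ((G * M).submatrix id (f ∘ c)).det ≠ 0 := by
    rw [← Matrix.submatrix_mul_equiv _ _ _ (Equiv.refl _), Equiv.coe_refl, Matrix.submatrix_id_id,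
      hG, Matrix.det_one]
    exact one_ne_zero
  have hdet := det_perturb_coneMatrix_ne_zero hf hGM
  rw [Matrix.map_mul, ← map_C_mul_perturb,
    ← Matrix.submatrix_mul_equiv _ _ _ (Equiv.refl _)] at hdet
  have hinj : Function.Injective (ψ.comp (Polynomial.mapRingHom
      (algebraMap (MvPolynomial (ConeIdx n C) K) (LField K n C)))) :=
    hψ.comp (Polynomial.map_injective _ (IsFractionRing.injective _ _))
  have hN := linearIndependent_col_map_of_det_mul_ne_zero hinj hdet
  rw [Nmat_eq_map_perturb]
  exact hN

lemma eVec_sub_eVec_mem_of_ne_zero {C : PointedCone ℝ (Fin n → ℝ)} {i k : Fin n}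
    (h : (1 + (Polynomial.X : Polynomial (LField K n C)) • (Bmat K n C).map Polynomial.C :
      Matrix (Fin n) (Fin n) _) i k ≠ 0) :
    eVec n k - eVec n i ∈ C := by
  by_contra hik
  have hne : i ≠ k := by
    rintro rfl
    simp at hik
  simp [Bmat, hne, hik] at h

lemma sum_eVec_comp_mem_rankPolytope {f : Fin d → Fin n} (h : (M.submatrix id f).det ≠ 0) :
    ∑ k, eVec n (f k) ∈ rankPolytope M := by
  have hli : LinearIndependent K (M.col ∘ f) := Matrix.linearIndependent_cols_of_det_ne_zero h
  have hinj : Function.Injective f := hli.injective.of_comp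
  rw [← Finset.sum_image (f := eVec n) hinj.injOn]
  refine sum_eVec_mem_rankPolytope (by simp [Finset.card_image_of_injective _ hinj]) ?_
  rw [Finset.coe_image, Finset.coe_univ, Set.image_univ]
  exact (linearIndepOn_range_iff hinj _).2 hli

lemma sum_eVec_mem_of_det_ne_zero {C : PointedCone ℝ (Fin n → ℝ)} {z : Finset (Fin n)}
    (e : Fin d ≃ z) (h : ((Nmat M C).submatrix id fun k => (e k : Fin n)).det ≠ 0) :
    ∑ i ∈ z, eVec n i ∈ rankPolytope M + (C : Set (Fin n → ℝ)) := by
  rw [Nmat_eq_perturb, perturb, ← Matrix.submatrix_mul_equiv _ _ _ (Equiv.refl _)] at h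
  obtain ⟨f, hf, hdet⟩ := exists_det_submatrix_ne_zero_of_det_mul_ne_zero h
  rw [Equiv.coe_refl, Matrix.submatrix_id_id, Matrix.submatrix_map, Matrix.submatrix_map] at hdet
  have hM := det_ne_zero_of_det_map_ne_zero _ (det_ne_zero_of_det_map_ne_zero _ hdet)
  refine ⟨_, sum_eVec_comp_mem_rankPolytope hM, ∑ k, (eVec n (e k) - eVec n (f k)),
    sum_mem fun k _ => eVec_sub_eVec_mem_of_ne_zero (hf k), ?_⟩
  simp only [Finset.sum_sub_distrib, add_sub_cancel]
  rw [e.sum_comp fun i : z => eVec n i, Finset.sum_coe_sort z]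

lemma sum_le_finrank_col_map_Nmat {F : Type*} [Field F] {S : Set (Fin n × Fin n)}
    {ψ : Polynomial (LField K n (rootCone S)) →+* F} (hψ : Function.Injective ψ) {x : Fin n → ℝ}
    (hx : x ∈ rankPolytope M + (rootCone S : Set (Fin n → ℝ))) (h01 : ∀ i, 0 ≤ x i ∧ x i ≤ 1)
    (U : Finset (Fin n)) :
    ∑ i ∈ U, x i ≤ (((Nmat M (rootCone S)).map ψ).col '' U).finrank F := by
  obtain ⟨p, hp, q, hq, rfl⟩ := hx
  obtain ⟨f, hf, hfU⟩ := exists_transversal_sum_le_finrank_image (v := M.col)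
    (sum_le_finrank_of_mem_rankPolytope hp) hq h01 U
  obtain ⟨z, hzU, hz, hcard⟩ := exists_linearIndepOn_card_eq_finrank_image (K := K) (M.col ∘ f) U
  have hzN := linearIndepOn_col_map_Nmat hψ hf hz
  rw [← hcard, ← finrank_image_eq_card_of_linearIndepOn hzN] at hfU
  exact hfU.trans (Nat.cast_le.2 (finrank_image_mono _ (Finset.coe_subset.2 hzU)))

end ConePerturbation

/-- For `N = M(1 + tB)`: a `d × d` minor of `N` on columns `z` is nonzero iff
`e_z ∈ P_M + C`; consequently the rank polytope of `N` over `L(t)` equals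
`(P_M + C) ∩ Δ_{d,n}`. -/
theorem det_minor_ne_zero_iff_and_rankPolytope_eq {K : Type*} [Field K] {d n : ℕ}
    (M : Matrix (Fin d) (Fin n) K) (hM : M.rank = d)
    (C : Set (Fin n → ℝ)) (hC : IsMatroidalCone C) :
    (∀ (z : Finset (Fin n)) (hz : z.card = d),
      ((Nmat M C).submatrix id
          (fun i : Fin d => ((z.orderIsoOfFin hz i : ↥z) : Fin n))).det ≠ 0 ↔
        (∑ i ∈ z, eVec n i) ∈ rankPolytope M + C) ∧
    rankPolytope ((Nmat M C).map
        (algebraMap (Polynomial (LField K n C))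
          (FractionRing (Polynomial (LField K n C))))) =
      (rankPolytope M + C) ∩ hypersimplex d n := by
  obtain ⟨S, rfl⟩ := hC.exists_rootCone_eq
  let Q := Polynomial (LField K n (rootCone S))
  let ψ := algebraMap Q (FractionRing Q)
  have hψ : Function.Injective ψ := IsFractionRing.injective _ _
  have hdet {z : Finset (Fin n)} (hz : z.card = d) :=
    det_submatrix_ne_zero_iff_linearIndepOn hψ (Nmat M (rootCone S)) (z.orderIsoOfFin hz).toEquiv
  have hminor {z : Finset (Fin n)} (hz : z.card = d) :
      LinearIndepOn (FractionRing Q) ((Nmat M (rootCone S)).map ψ).col z ↔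
        ∑ i ∈ z, eVec n i ∈ rankPolytope M + (rootCone S : Set (Fin n → ℝ)) := by
    refine ⟨fun h => sum_eVec_mem_of_det_ne_zero _ ((hdet hz).2 h), fun h => ?_⟩
    have hsum := sum_le_finrank_col_map_Nmat hψ h (sum_eVec_mem_hypersimplex hz).1 z
    simp only [sum_eVec_apply] at hsum
    exact linearIndepOn_of_card_le_finrank_image (by simpa using hsum)
  refine ⟨fun z hz => (hdet hz).trans (hminor hz), Set.Subset.antisymm ?_ ?_⟩
  · exact rankPolytope_subset
      (((convex_convexHull ℝ _).add (rootCone S).convex).inter (convex_hypersimplex d n))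
      fun z hz h => ⟨(hminor hz).1 h, sum_eVec_mem_hypersimplex hz⟩
  · exact fun x ⟨hx, h01, hd⟩ =>
      mem_rankPolytope_of_sum_le_finrank (sum_le_finrank_col_map_Nmat hψ hx h01) hd
end
end

section
/- Let K be a field and let M be a d×n matrix over K of rank d with no zero columns. Fix an integer r ≥ 0, let R = ℤ[t₀,…,t_r] and F(X) = ∏_{i=0}^r (X + tᵢ) ∈ R[X]. For each permutation σ of {1,…,n}, let B(σ) be the least d-element subset of {1,…,n}, in the lexicographic order on d-element subsets induced by the total order σ(1) ≺ σ(2) ≺ ⋯ ≺ σ(n), whose columns in M are linearly independent. Then the element ∑_{σ ∈ Sₙ} (∏_{i ∈ {1,…,n}∖B(σ)} F(zᵢ)) · ((z_{σ(2)} − z_{σ(1)})·(z_{σ(3)} − z_{σ(2)})⋯(z_{σ(n)} − z_{σ(n−1)}))^{-1} of the field of fractions of R[z₁,…,zₙ] lies in the subring R[z₁,…,zₙ], and as a polynomial it has degree at most r in each variable zᵢ. -/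
set_option synthInstance.maxHeartbeats 1000000
set_option maxHeartbeats 1000000

noncomputable section

/-- The strict lexicographic order on subsets of `{1,…,n}` induced by the total order
`σ(1) ≺ σ(2) ≺ ⋯ ≺ σ(n)`. -/
def lexLtPerm {n : ℕ} (σ : Equiv.Perm (Fin n)) (A B : Finset (Fin n)) : Prop :=
  List.Lex (· < ·) ((A.image σ.symm).sort (· ≤ ·)) ((B.image σ.symm).sort (· ≤ ·))

/-- The coefficient ring `R = ℤ[t₀,…,t_r]`. -/
abbrev Rring (r : ℕ) : Type := MvPolynomial (Fin (r + 1)) ℤ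

/-- The universal Leray relation `F(X) = ∏_{i=0}^r (X + tᵢ) ∈ R[X]`. -/
def Fpoly (r : ℕ) : Polynomial (Rring r) :=
  ∏ i : Fin (r + 1), (Polynomial.X + Polynomial.C (MvPolynomial.X i))

/-- The polynomial ring `S = R[z₁,…,zₙ]`. -/
abbrev Sring (r n : ℕ) : Type := MvPolynomial (Fin n) (Rring r)

/-
Write every summand over the common denominator `∏_{i < j} (z_j - z_i)`. Modulo `z_j - z_i` the
terms of `σ` and `(i j) ∘ σ` of the resulting numerator cancel. The only case in which this depends
on the bases is that `i` and `j` are neighbours for `σ`. The lexicographically least basis is the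
one found by the greedy algorithm, and by the exchange property `B((i j) ∘ σ)` is `B(σ)` or its
image under `(i j)`, so that the two products of values of `F` agree once `z_i = z_j`. Since the
differences `z_j - z_i` are pairwise non-associated primes, the common denominator divides the
numerator. The degree bound is checked summand by summand, degrees in one variable being additive:
each numerator has degree at most `r + 1` in `z_i`, and each denominator at least `1` if `n > 1`.
-/

namespace FinkFormula

open MvPolynomial

theorem prod_dvd_of_forall_prime {ι M : Type*} [CommMonoidWithZero M] [IsCancelMulZero M]
    {s : Finset ι} {f : ι → M} {a : M} (hprime : ∀ i ∈ s, Prime (f i))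
    (hndvd : (s : Set ι).Pairwise fun i j ↦ ¬ f i ∣ f j) (hdvd : ∀ i ∈ s, f i ∣ a) :
    ∏ i ∈ s, f i ∣ a := by
  induction s using Finset.cons_induction generalizing a with
  | empty => simp
  | cons i s his ih =>
    obtain ⟨b, rfl⟩ := hdvd i (Finset.mem_cons_self i s)
    rw [Finset.prod_cons]
    have hmem : ∀ k ∈ s, k ∈ Finset.cons i s his := fun k hk ↦ Finset.mem_cons_of_mem hk
    refine mul_dvd_mul_left _ (ih (fun k hk ↦ hprime k (hmem k hk)) (hndvd.mono hmem) ?_)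
    intro k hk
    have hki : k ≠ i := ne_of_mem_of_not_mem hk his
    exact ((hprime k (hmem k hk)).dvd_or_dvd (hdvd k (hmem k hk))).resolve_left
      (hndvd (hmem k hk) (Finset.mem_cons_self i s) hki)

theorem dvd_sum_of_involutive {ι R : Type*} [Fintype ι] [CommRing R] {c : R} {f : ι → R}
    {g : ι → ι} (hg : Function.Involutive g) (hfix : ∀ a, g a ≠ a)
    (h : ∀ a, c ∣ f a + f (g a)) : c ∣ ∑ a, f a := by
  rw [← Ideal.Quotient.eq_zero_iff_dvd, map_sum]
  refine Finset.sum_ninvolution g (fun a ↦ ?_) (fun a _ ↦ hfix a) (by simp) hg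
  rw [← map_add, Ideal.Quotient.eq_zero_iff_dvd]
  exact h a

section Differences

variable {τ R : Type*} [CommRing R]

theorem dvd_algHom_sub_algHom {A : Type*} [CommRing A] [Algebra R A]
    (φ ψ : MvPolynomial τ R →ₐ[R] A) {c : A} (h : ∀ k, c ∣ φ (X k) - ψ (X k))
    (p : MvPolynomial τ R) : c ∣ φ p - ψ p := by
  let π := Ideal.Quotient.mkₐ R (Ideal.span {c})
  have hφψ : π.comp φ = π.comp ψ := algHom_ext fun k ↦ by
    rw [AlgHom.comp_apply, AlgHom.comp_apply, ← sub_eq_zero, ← map_sub]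
    exact (Ideal.Quotient.eq_zero_iff_dvd _ _).2 (h k)
  rw [← Ideal.Quotient.eq_zero_iff_dvd, map_sub, sub_eq_zero]
  exact DFunLike.congr_fun hφψ p

theorem X_sub_X_dvd_sub_rename_swap [DecidableEq τ] (i j : τ) (p : MvPolynomial τ R) :
    X j - X i ∣ p - rename (Equiv.swap i j) p := by
  refine dvd_algHom_sub_algHom (AlgHom.id R _) (rename (Equiv.swap i j)) (fun k ↦ ?_) p
  rw [AlgHom.id_apply, rename_X, Equiv.swap_apply_def]
  split_ifs with hi hj
  · rw [hi, ← dvd_neg, neg_sub]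
  · rw [hj]
  · simp

/-- The substitution `X_j ↦ X_i` fixing the other variables, whose kernel is generated by
`X_j - X_i`. -/
def identifyVar [DecidableEq τ] (R : Type*) [CommRing R] (i j : τ) :
    MvPolynomial τ R →ₐ[R] MvPolynomial τ R :=
  rename (Function.update id j i)

theorem X_sub_X_dvd_iff [DecidableEq τ] {i j : τ} {p : MvPolynomial τ R} :
    X j - X i ∣ p ↔ identifyVar R i j p = 0 := by
  constructor
  · rintro ⟨q, rfl⟩
    by_cases hij : i = j <;> simp [identifyVar, hij]
  · intro hp
    have h : X j - X i ∣ p - identifyVar R i j p := by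
      refine dvd_algHom_sub_algHom (AlgHom.id R _) (identifyVar R i j) (fun k ↦ ?_) p
      obtain rfl | hk := eq_or_ne k j <;> simp [identifyVar, *]
    rwa [hp, sub_zero] at h

theorem X_sub_X_ne_zero [Nontrivial R] {i j : τ} (hij : i ≠ j) :
    (X j - X i : MvPolynomial τ R) ≠ 0 :=
  sub_ne_zero.2 (X_injective.ne hij.symm)

theorem not_X_sub_X_dvd_X_sub_X [Nontrivial R] {i j k l : τ} (hkl : k ≠ l)
    (h : s(i, j) ≠ s(k, l)) : ¬ (X j - X i : MvPolynomial τ R) ∣ X l - X k := by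
  classical
  rw [X_sub_X_dvd_iff, identifyVar, map_sub, rename_X, rename_X]
  refine X_sub_X_ne_zero ?_
  simp only [Function.update_apply, id_eq]
  grind

theorem prime_X_sub_X [IsDomain R] {i j : τ} (hij : i ≠ j) :
    Prime (X j - X i : MvPolynomial τ R) := by
  classical
  refine ⟨X_sub_X_ne_zero hij, fun hu ↦ ?_, fun p q hpq ↦ ?_⟩
  · simpa using X_sub_X_dvd_iff.1 (hu.dvd (a := (1 : MvPolynomial τ R)))
  · rw [X_sub_X_dvd_iff, map_mul, mul_eq_zero] at hpq
    rwa [X_sub_X_dvd_iff, X_sub_X_dvd_iff]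

theorem degreeOf_X_sub_X_left [Nontrivial R] {i j : τ} (hij : i ≠ j) :
    degreeOf i (X i - X j : MvPolynomial τ R) = 1 := by
  rw [sub_eq_add_neg, degreeOf_add_eq_of_degreeOf_lt, degreeOf_X_self]
  rw [degreeOf_neg, degreeOf_X_of_ne hij, degreeOf_X_self]
  exact Nat.one_pos

theorem degreeOf_le_of_dvd [NoZeroDivisors R] {p q : MvPolynomial τ R} (hpq : p ∣ q) (hq : q ≠ 0)
    (k : τ) : degreeOf k p ≤ degreeOf k q := by
  obtain ⟨s, rfl⟩ := hpq
  rw [degreeOf_mul_eq (left_ne_zero_of_mul hq) (right_ne_zero_of_mul hq)]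
  exact Nat.le_add_right _ _

end Differences

section Vandermonde

variable {n : ℕ} {R : Type*} [CommRing R]

/-- The product of the differences `X_b - X_a` over a set of pairs `(a, b)`. -/
def differenceProduct (R : Type*) [CommRing R] (E : Finset (Fin n × Fin n)) :
    MvPolynomial (Fin n) R :=
  ∏ e ∈ E, (X e.2 - X e.1)

/-- The Vandermonde product `∏_{a < b} (X_b - X_a)`, a common denominator of the summands of
Fink's formula. -/
def vandermondeProduct (n : ℕ) (R : Type*) [CommRing R] : MvPolynomial (Fin n) R :=
  differenceProduct R {e | e.1 < e.2}

/-- The denominator `∏_k (X_{σ(k+1)} - X_{σ(k)})` of the summand of `σ` in Fink's formula. -/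
def chainDenominator (R : Type*) [CommRing R] (σ : Equiv.Perm (Fin n)) :
    MvPolynomial (Fin n) R :=
  ∏ k ∈ (Finset.range (n - 1)).attach,
    (X (σ ⟨k.1 + 1, by have := Finset.mem_range.mp k.2; omega⟩) -
      X (σ ⟨k.1, by have := Finset.mem_range.mp k.2; omega⟩))

/-- The factor by which the numerator of the summand of `σ` gets multiplied when that summand is
written over the common denominator `vandermondeProduct`. -/
def chainCofactor (R : Type*) [CommRing R] (σ : Equiv.Perm (Fin n)) : MvPolynomial (Fin n) R :=
  (Equiv.Perm.sign σ : ℤ) • rename σ (differenceProduct R {e | e.1.val + 1 < e.2.val})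

theorem X_sub_X_dvd_rename_differenceProduct {σ : Equiv.Perm (Fin n)}
    {E : Finset (Fin n × Fin n)} {i j : Fin n} (h : (σ.symm i, σ.symm j) ∈ E) :
    X j - X i ∣ rename σ (differenceProduct R E) := by
  simp only [differenceProduct, map_prod, map_sub, rename_X]
  simpa only [Equiv.apply_symm_apply] using
    Finset.dvd_prod_of_mem
      (fun e : Fin n × Fin n ↦ (X (σ e.2) - X (σ e.1) : MvPolynomial (Fin n) R)) h

theorem chainDenominator_eq_rename (σ : Equiv.Perm (Fin n)) :
    chainDenominator R σ =
      rename σ (differenceProduct R {e | e.1.val + 1 = e.2.val}) := by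
  rw [differenceProduct, map_prod, chainDenominator]
  refine Finset.prod_bij (fun k _ ↦
    (⟨k.1, by have := Finset.mem_range.mp k.2; omega⟩,
      ⟨k.1 + 1, by have := Finset.mem_range.mp k.2; omega⟩)) (by simp) ?_ ?_ (by simp)
  · intro k _ l _ hkl
    exact Subtype.ext (congrArg (fun e ↦ e.1.val) hkl)
  · rintro ⟨a, b⟩ hab
    have hab : a.val + 1 = b.val := by simpa using hab
    exact ⟨⟨a, Finset.mem_range.2 (by omega)⟩, by simp, by simp [hab]⟩

theorem rename_vandermondeProduct (σ : Equiv.Perm (Fin n)) :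
    rename σ (vandermondeProduct n R) = (Equiv.Perm.sign σ : ℤ) • vandermondeProduct n R := by
  have hpairs : ∀ f : Fin n → Fin n → MvPolynomial (Fin n) R,
      ∏ e : Fin n × Fin n with e.1 < e.2, f e.1 e.2 = ∏ i, ∏ j ∈ Finset.Ioi i, f i j :=
    fun f ↦ Finset.prod_finset_product' _ _ _ (by simp)
  rw [vandermondeProduct, differenceProduct, map_prod]
  simp only [map_sub, rename_X]
  rw [hpairs fun a b ↦ X (σ b) - X (σ a), hpairs fun a b ↦ X b - X a,
    σ.prod_Ioi_comp_eq_sign_mul_prod (f := fun a b ↦ X b - X a) (by simp), zsmul_eq_mul]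

theorem chainDenominator_mul_chainCofactor (σ : Equiv.Perm (Fin n)) :
    chainDenominator R σ * chainCofactor R σ = vandermondeProduct n R := by
  have hsplit : differenceProduct R {e : Fin n × Fin n | e.1.val + 1 = e.2.val} *
      differenceProduct R {e | e.1.val + 1 < e.2.val} = vandermondeProduct n R := by
    rw [vandermondeProduct, differenceProduct, differenceProduct, differenceProduct,
      ← Finset.prod_union (by rw [Finset.disjoint_filter]; omega)]
    congr 1
    ext e
    simp only [Finset.mem_union, Finset.mem_filter_univ, Fin.lt_def]
    omega
  rw [chainCofactor, mul_smul_comm, chainDenominator_eq_rename, ← map_mul, hsplit,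
    rename_vandermondeProduct, smul_smul, ← Units.val_mul, Int.units_mul_self]
  simp

theorem rename_swap_chainCofactor {i j : Fin n} (hij : i ≠ j) (σ : Equiv.Perm (Fin n)) :
    rename (Equiv.swap i j) (chainCofactor R σ) = -chainCofactor R (Equiv.swap i j * σ) := by
  rw [chainCofactor, chainCofactor, map_zsmul, rename_rename, Equiv.Perm.sign_mul,
    Equiv.Perm.sign_swap hij, Equiv.Perm.coe_mul]
  simp

theorem X_sub_X_dvd_chainCofactor {i j : Fin n} (hij : i ≠ j) {σ : Equiv.Perm (Fin n)}
    (h₁ : ¬ σ.symm i ⋖ σ.symm j) (h₂ : ¬ σ.symm j ⋖ σ.symm i) :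
    X j - X i ∣ chainCofactor R σ := by
  wlog hlt : σ.symm i < σ.symm j generalizing i j
  · rw [← neg_sub, neg_dvd]
    exact this hij.symm h₂ h₁ ((not_lt.1 hlt).lt_of_ne (σ.symm.injective.ne hij.symm))
  rw [Fin.covBy_iff, Nat.covBy_iff_add_one_eq] at h₁
  refine dvd_smul_of_dvd _ (X_sub_X_dvd_rename_differenceProduct ?_)
  rw [Finset.mem_filter_univ]
  exact (Nat.succ_le_of_lt hlt).lt_of_ne h₁

theorem X_sub_X_dvd_chainDenominator {i j : Fin n} {σ : Equiv.Perm (Fin n)}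
    (h : σ.symm i ⋖ σ.symm j) : X j - X i ∣ chainDenominator R σ := by
  rw [chainDenominator_eq_rename]
  exact X_sub_X_dvd_rename_differenceProduct (by simpa using h)

theorem X_sub_X_dvd_sum_mul_chainCofactor {N : Equiv.Perm (Fin n) → MvPolynomial (Fin n) R}
    (hN : ∀ σ i j, σ.symm i ⋖ σ.symm j → X j - X i ∣ N (Equiv.swap i j * σ) - N σ)
    {i j : Fin n} (hij : i ≠ j) : X j - X i ∣ ∑ σ, N σ * chainCofactor R σ := by
  refine dvd_sum_of_involutive (g := fun σ ↦ Equiv.swap i j * σ) (Equiv.swap_mul_involutive i j)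
    (fun σ ↦ by simpa using hij) fun σ ↦ ?_
  have hQ : chainCofactor R (Equiv.swap i j * σ) =
      -rename (Equiv.swap i j) (chainCofactor R σ) := by
    rw [rename_swap_chainCofactor hij, neg_neg]
  have hNQ : X j - X i ∣ (N (Equiv.swap i j * σ) - N σ) * chainCofactor R σ := by
    by_cases h₁ : σ.symm i ⋖ σ.symm j
    · exact (hN σ i j h₁).mul_right _
    by_cases h₂ : σ.symm j ⋖ σ.symm i
    · rw [← neg_sub, neg_dvd, Equiv.swap_comm]
      exact (hN σ j i h₂).mul_right _
    · exact (X_sub_X_dvd_chainCofactor hij h₁ h₂).mul_left _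
  have hsum : N σ * chainCofactor R σ +
      N (Equiv.swap i j * σ) * chainCofactor R (Equiv.swap i j * σ) =
      N (Equiv.swap i j * σ) * (chainCofactor R σ -
          rename (Equiv.swap i j) (chainCofactor R σ)) -
        (N (Equiv.swap i j * σ) - N σ) * chainCofactor R σ := by
    rw [hQ]; ring
  rw [hsum]
  exact dvd_sub ((X_sub_X_dvd_sub_rename_swap i j _).mul_left _) hNQ

variable [IsDomain R]

theorem vandermondeProduct_ne_zero : vandermondeProduct n R ≠ 0 :=
  Finset.prod_ne_zero_iff.2 fun e he ↦ X_sub_X_ne_zero (by simpa using he : e.1 < e.2).ne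

theorem vandermondeProduct_dvd {p : MvPolynomial (Fin n) R}
    (h : ∀ i j, i ≠ j → X j - X i ∣ p) : vandermondeProduct n R ∣ p := by
  have hlt {e : Fin n × Fin n} (he : e ∈ ({e | e.1 < e.2} : Finset _)) : e.1 < e.2 :=
    (Finset.mem_filter_univ e).1 he
  refine prod_dvd_of_forall_prime (fun e he ↦ prime_X_sub_X (hlt he).ne)
    (fun e he f hf hef ↦ not_X_sub_X_dvd_X_sub_X (hlt hf).ne fun hs ↦ ?_)
    (fun e he ↦ h _ _ (hlt he).ne)
  obtain hs | hs := Sym2.eq_iff.1 hs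
  · exact hef (Prod.ext hs.1 hs.2)
  · exact (hlt he).asymm (hs.1 ▸ hs.2 ▸ hlt hf)

theorem chainDenominator_ne_zero (σ : Equiv.Perm (Fin n)) : chainDenominator R σ ≠ 0 := by
  have h : chainDenominator R σ * chainCofactor R σ ≠ 0 :=
    chainDenominator_mul_chainCofactor (R := R) σ ▸ vandermondeProduct_ne_zero
  exact left_ne_zero_of_mul h

theorem chainCofactor_ne_zero (σ : Equiv.Perm (Fin n)) : chainCofactor R σ ≠ 0 := by
  have h : chainDenominator R σ * chainCofactor R σ ≠ 0 :=
    chainDenominator_mul_chainCofactor (R := R) σ ▸ vandermondeProduct_ne_zero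
  exact right_ne_zero_of_mul h

theorem degreeOf_chainDenominator_pos (hn : 1 < n) (σ : Equiv.Perm (Fin n)) (i : Fin n) :
    0 < degreeOf i (chainDenominator R σ) := by
  have hdvd : ∃ j, i ≠ j ∧ X i - X j ∣ chainDenominator R σ := by
    obtain ⟨k, hk⟩ : ∃ k, k ⋖ σ.symm i ∨ σ.symm i ⋖ k := by
      simp only [Fin.covBy_iff, Nat.covBy_iff_add_one_eq]
      obtain h0 | hpos := Nat.eq_zero_or_pos (σ.symm i).val
      · exact ⟨⟨1, hn⟩, Or.inr (by simp [h0])⟩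
      · exact ⟨⟨(σ.symm i).val - 1, by omega⟩, Or.inl (Nat.sub_add_cancel hpos)⟩
    refine ⟨σ k, ?_, ?_⟩
    · rintro rfl
      simp at hk
    · obtain hk | hk := hk
      · exact X_sub_X_dvd_chainDenominator (by simpa only [Equiv.symm_apply_apply] using hk)
      · rw [← neg_sub, neg_dvd]
        exact X_sub_X_dvd_chainDenominator (by simpa only [Equiv.symm_apply_apply] using hk)
  obtain ⟨j, hij, hdvd⟩ := hdvd
  calc 0 < degreeOf i (X i - X j : MvPolynomial (Fin n) R) := by simp [degreeOf_X_sub_X_left hij]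
    _ ≤ degreeOf i (chainDenominator R σ) :=
      degreeOf_le_of_dvd hdvd (chainDenominator_ne_zero σ) i

theorem degreeOf_le_of_vandermondeProduct_mul_eq {N : Equiv.Perm (Fin n) → MvPolynomial (Fin n) R}
    {p : MvPolynomial (Fin n) R}
    (hp : ∑ σ, N σ * chainCofactor R σ = vandermondeProduct n R * p) {i : Fin n} {r : ℕ}
    (hdeg : ∀ σ, degreeOf i (N σ) ≤ r + degreeOf i (chainDenominator R σ)) :
    degreeOf i p ≤ r := by
  obtain rfl | hp0 := eq_or_ne p 0
  · simp
  suffices h : degreeOf i (vandermondeProduct n R) + degreeOf i p ≤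
      degreeOf i (vandermondeProduct n R) + r from Nat.le_of_add_le_add_left h
  rw [← degreeOf_mul_eq vandermondeProduct_ne_zero hp0, ← hp]
  refine (degreeOf_sum_le i _ _).trans (Finset.sup_le fun σ _ ↦ ?_)
  calc degreeOf i (N σ * chainCofactor R σ)
      ≤ degreeOf i (N σ) + degreeOf i (chainCofactor R σ) := degreeOf_mul_le i _ _
    _ ≤ r + degreeOf i (chainDenominator R σ) + degreeOf i (chainCofactor R σ) := by
      gcongr
      exact hdeg σ
    _ = degreeOf i (vandermondeProduct n R) + r := by
      rw [← chainDenominator_mul_chainCofactor σ,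
        degreeOf_mul_eq (chainDenominator_ne_zero σ) (chainCofactor_ne_zero σ)]
      ring

theorem exists_polynomial_eq_sum_div_chainDenominator
    {N : Equiv.Perm (Fin n) → MvPolynomial (Fin n) R} {r : ℕ}
    (hN : ∀ σ i j, σ.symm i ⋖ σ.symm j → X j - X i ∣ N (Equiv.swap i j * σ) - N σ)
    (hdeg : ∀ σ i, degreeOf i (N σ) ≤ r + degreeOf i (chainDenominator R σ)) :
    ∃ p : MvPolynomial (Fin n) R, (∀ i, p.degreeOf i ≤ r) ∧
      algebraMap _ (FractionRing (MvPolynomial (Fin n) R)) p =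
        ∑ σ, algebraMap _ (FractionRing (MvPolynomial (Fin n) R)) (N σ) *
          (algebraMap _ (FractionRing (MvPolynomial (Fin n) R)) (chainDenominator R σ))⁻¹ := by
  obtain ⟨p, hp⟩ := vandermondeProduct_dvd fun i j hij ↦ X_sub_X_dvd_sum_mul_chainCofactor hN hij
  refine ⟨p, fun i ↦ degreeOf_le_of_vandermondeProduct_mul_eq hp (hdeg · i), ?_⟩
  have hne {q : MvPolynomial (Fin n) R} (hq : q ≠ 0) :
      algebraMap _ (FractionRing (MvPolynomial (Fin n) R)) q ≠ 0 := by
    simpa using hq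
  apply mul_left_cancel₀ (hne vandermondeProduct_ne_zero)
  rw [← map_mul, ← hp, map_sum, Finset.mul_sum]
  refine Finset.sum_congr rfl fun σ _ ↦ ?_
  have hσ := hne (chainDenominator_ne_zero σ)
  rw [← chainDenominator_mul_chainCofactor σ, map_mul, map_mul]
  field_simp

end Vandermonde

section GreedyBasis

variable {α ι : Type*} [LinearOrder ι] {M : Matroid α} {pos : α → ι}

theorem closure_insert_eq_closure {X : Set α} {e : α} (h : e ∉ M.E \ M.closure X) :
    M.closure (insert e X) = M.closure X := by
  by_cases he : e ∈ M.E
  · exact M.closure_insert_eq_of_mem_closure (by_contra fun hX ↦ h ⟨he, hX⟩)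
  · rw [← M.closure_inter_ground, Set.insert_inter_of_notMem he, M.closure_inter_ground]

/-- The basis of the matroid `M` selected by the greedy algorithm when the elements are processed
in the order of their positions `pos`: an element is kept if it is not in the closure of the
elements that precede it. -/
def greedyBasis (M : Matroid α) (pos : α → ι) : Set α :=
  {e | e ∈ M.E \ M.closure {x | pos x < pos e}}

theorem eq_greedyBasis {B : Set α} (hpos : pos.Injective) (hB : M.IsBase B)
    (hmin : ∀ a ∈ B, ∀ b ∉ B, pos b < pos a → ¬ M.IsBase (insert b (B \ {a}))) :
    B = greedyBasis M pos := by
  ext e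
  refine ⟨fun he ↦ ⟨hB.subset_ground he, fun hcl ↦ ?_⟩, fun ⟨heE, hcl⟩ ↦ ?_⟩
  · have hpred : {x | pos x < pos e} ∩ M.E ⊆ M.closure (B \ {e}) := by
      rintro x ⟨hx, hxE⟩
      by_contra hxcl
      have hxB : x ∉ B := fun hxB ↦
        hxcl (M.mem_closure_of_mem' ⟨hxB, fun hxe ↦ hx.ne (congrArg pos hxe)⟩ hxE)
      exact hmin e he x hxB hx (hB.exchange_base_of_notMem_closure he hxcl hxE)
    rw [← M.closure_inter_ground] at hcl
    exact hB.indep.notMem_closure_sdiff_of_mem he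
      (M.closure_subset_closure_of_subset_closure hpred hcl)
  · by_contra heB
    have hcirc := hB.fundCircuit_isCircuit heE heB
    have hpred : M.fundCircuit e B \ {e} ⊆ {x | pos x < pos e} := by
      rintro a ⟨haC, hae⟩
      have haB : a ∈ B := (M.fundCircuit_subset_insert e B haC).resolve_left hae
      have hindep := (hB.indep.mem_fundCircuit_iff (hB.closure_eq ▸ heE) heB).1 haC
      have hbase := hB.exchange_isBase_of_indep' haB heB hindep
      rw [← Set.insert_sdiff_singleton_comm (Ne.symm hae)] at hbase
      exact (not_lt.1 fun hlt ↦ hmin a haB e heB hlt hbase).lt_of_ne (hpos.ne hae)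
    exact hcl (M.closure_subset_closure hpred
      (hcirc.mem_closure_sdiff_singleton_of_mem (M.mem_fundCircuit e B)))

variable {i j : α}

theorem setOf_pos_lt_eq_insert (hpos : pos.Injective) (hij : pos i ⋖ pos j) :
    {x | pos x < pos j} = insert i {x | pos x < pos i} := by
  ext x
  rw [Set.mem_insert_iff, Set.mem_ofPred_eq, Set.mem_ofPred_eq, hij.lt_iff_le_left,
    le_iff_eq_or_lt, hpos.eq_iff]

theorem mem_greedyBasis_right (hpos : pos.Injective) (hij : pos i ⋖ pos j) :
    j ∈ greedyBasis M pos ↔ j ∈ M.E \ M.closure (insert i {x | pos x < pos i}) := by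
  rw [← setOf_pos_lt_eq_insert hpos hij, greedyBasis, Set.mem_ofPred_eq]

variable [DecidableEq α]

theorem setOf_pos_swap_lt_eq (hij : pos i ⋖ pos j) {c : ι} (hc : c ≠ pos j) :
    {x | pos (Equiv.swap i j x) < c} = {x | pos x < c} := by
  have hlt : pos i < c ↔ pos j < c := by
    rw [hij.lt_iff_le_right, le_iff_lt_or_eq, or_iff_left hc.symm]
  ext x
  rw [Set.mem_ofPred_eq, Set.mem_ofPred_eq, Equiv.swap_apply_def]
  split_ifs with hi hj
  · rw [hi, hlt]
  · rw [hj, hlt]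
  · rfl

theorem mem_greedyBasis_comp_swap (hpos : pos.Injective) (hij : pos i ⋖ pos j) {e : α}
    (hi : e ≠ i) (hj : e ≠ j) :
    e ∈ greedyBasis M (pos ∘ Equiv.swap i j) ↔ e ∈ greedyBasis M pos := by
  simp only [greedyBasis, Set.mem_ofPred_eq, Function.comp_apply,
    Equiv.swap_apply_of_ne_of_ne hi hj, setOf_pos_swap_lt_eq hij (hpos.ne hj)]

theorem mem_greedyBasis_comp_swap_right (hij : pos i ⋖ pos j) :
    j ∈ greedyBasis M (pos ∘ Equiv.swap i j) ↔ j ∈ M.E \ M.closure {x | pos x < pos i} := by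
  simp only [greedyBasis, Set.mem_ofPred_eq, Function.comp_apply, Equiv.swap_apply_right,
    setOf_pos_swap_lt_eq hij hij.lt.ne]

theorem mem_greedyBasis_comp_swap_left (hpos : pos.Injective) (hij : pos i ⋖ pos j) :
    i ∈ greedyBasis M (pos ∘ Equiv.swap i j) ↔
      i ∈ M.E \ M.closure (insert j {x | pos x < pos i}) := by
  have hji : (pos ∘ Equiv.swap i j) j ⋖ (pos ∘ Equiv.swap i j) i := by simpa using hij
  rw [mem_greedyBasis_right (hpos.comp (Equiv.swap i j).injective) hji]
  simp only [Function.comp_apply, Equiv.swap_apply_right, setOf_pos_swap_lt_eq hij hij.lt.ne]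

theorem greedyBasis_comp_swap (M : Matroid α) (hpos : pos.Injective) (hij : pos i ⋖ pos j) :
    greedyBasis M (pos ∘ Equiv.swap i j) = greedyBasis M pos ∨
      greedyBasis M (pos ∘ Equiv.swap i j) = Equiv.swap i j '' greedyBasis M pos := by
  obtain ⟨P, hP⟩ : ∃ P, P = {x | pos x < pos i} := ⟨_, rfl⟩
  have hi : i ∈ greedyBasis M pos ↔ i ∈ M.E \ M.closure P := hP ▸ Iff.rfl
  have hj := mem_greedyBasis_right (M := M) hpos hij
  have hi' := mem_greedyBasis_comp_swap_left (M := M) hpos hij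
  have hj' := mem_greedyBasis_comp_swap_right (M := M) hij
  have hother {e : α} := mem_greedyBasis_comp_swap (M := M) hpos hij (e := e)
  rw [← hP] at hj hi' hj'
  by_cases hboth : i ∈ M.E \ M.closure P ∧ j ∈ M.E \ M.closure P
  · right
    have hexch : i ∈ M.closure (insert j P) ↔ j ∈ M.closure (insert i P) :=
      ⟨M.mem_closure_insert hboth.1.2, M.mem_closure_insert hboth.2.2⟩
    ext e
    rw [Equiv.image_eq_preimage_symm, Set.mem_preimage, Equiv.symm_swap, Equiv.swap_apply_def]
    grind
  · left
    have hmono (e : α) : M.closure P ⊆ M.closure (insert e P) :=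
      M.closure_subset_closure (Set.subset_insert e P)
    have hiP := closure_insert_eq_closure (M := M) (X := P) (e := i)
    have hjP := closure_insert_eq_closure (M := M) (X := P) (e := j)
    have hi_iff : i ∈ greedyBasis M (pos ∘ Equiv.swap i j) ↔ i ∈ greedyBasis M pos := by grind
    have hj_iff : j ∈ greedyBasis M (pos ∘ Equiv.swap i j) ↔ j ∈ greedyBasis M pos := by grind
    ext e
    by_cases hei : e = i
    · rwa [hei]
    by_cases hej : e = j
    · rwa [hej]
    exact hother hei hej

end GreedyBasis

section LexMinBase

theorem not_lex_of_notMem_of_mem {α : Type*} [LinearOrder α] {l₁ l₂ : List α}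
    (h₁ : l₁.SortedLT) (h₂ : l₂.SortedLT) (hlen : l₂.length ≤ l₁.length) {x : α} (hx₁ : x ∉ l₁)
    (hx₂ : x ∈ l₂) (hlt : ∀ y < x, y ∈ l₁ ↔ y ∈ l₂) : ¬ List.Lex (· < ·) l₁ l₂ := by
  intro hlex
  rw [List.sortedLT_iff_pairwise] at h₁ h₂
  induction hlex with
  | nil => simp at hlen
  | @cons a l₁ l₂ _ ih =>
    rw [List.pairwise_cons] at h₁ h₂
    have ha₁ : a ∉ l₁ := fun ha ↦ (h₁.1 a ha).false
    have ha₂ : a ∉ l₂ := fun ha ↦ (h₂.1 a ha).false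
    have hxl : x ∉ l₁ := fun hx ↦ hx₁ (List.mem_cons_of_mem a hx)
    have hxa : x ≠ a := fun hxa ↦ hx₁ (hxa ▸ List.mem_cons_self)
    refine ih h₁.2 h₂.2 (Nat.le_of_succ_le_succ hlen) hxl
      (List.mem_of_ne_of_mem hxa hx₂) fun y hyx ↦ ?_
    obtain rfl | hya := eq_or_ne y a
    · exact iff_of_false ha₁ ha₂
    · simpa only [List.mem_cons, hya, false_or] using hlt y hyx
  | @rel a l₁ b l₂ hab =>
    have hb : ∀ y ∈ b :: l₂, b ≤ y :=
      List.forall_mem_cons.2 ⟨le_rfl, fun y hy ↦ (List.rel_of_pairwise_cons h₂ hy).le⟩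
    exact (hb a ((hlt a (hab.trans_le (hb x hx₂))).1 List.mem_cons_self)).not_gt hab

variable {n : ℕ} {M : Matroid (Fin n)} {σ : Equiv.Perm (Fin n)} {B : Finset (Fin n)}

theorem not_lexLtPerm_insert_erase {a b : Fin n} (ha : a ∈ B) (hb : b ∉ B)
    (hab : σ.symm b < σ.symm a) : ¬ lexLtPerm σ B (insert b (B.erase a)) := by
  have hcard : (insert b (B.erase a)).card = B.card := by
    rw [Finset.card_insert_of_notMem (by simp [hb]), Finset.card_erase_add_one ha]
  refine not_lex_of_notMem_of_mem (x := σ.symm b) (Finset.sortedLT_sort _)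
    (Finset.sortedLT_sort _) ?_ (by simpa using hb) (by simp) fun y hy ↦ ?_
  · simp only [Finset.length_sort, Finset.card_image_of_injective _ σ.symm.injective, hcard,
      le_refl]
  · obtain ⟨c, rfl⟩ := σ.symm.surjective y
    have hcb : c ≠ b := ne_of_apply_ne σ.symm hy.ne
    have hca : c ≠ a := ne_of_apply_ne σ.symm (hy.trans hab).ne
    simp [hcb, hca]

/-- `B` is the least basis of the matroid `M` in the lexicographic order induced by `σ`. -/
def IsLexMinBase (M : Matroid (Fin n)) (σ : Equiv.Perm (Fin n)) (B : Finset (Fin n)) : Prop :=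
  M.IsBase B ∧ ∀ B' : Finset (Fin n), M.IsBase B' → B = B' ∨ lexLtPerm σ B B'

theorem IsLexMinBase.coe_eq_greedyBasis (h : IsLexMinBase M σ B) :
    (B : Set (Fin n)) = greedyBasis M σ.symm := by
  refine eq_greedyBasis σ.symm.injective h.1 fun a ha b hb hlt hbase ↦ ?_
  rw [Finset.mem_coe] at ha hb
  rw [← Finset.coe_erase, ← Finset.coe_insert] at hbase
  refine (h.2 _ hbase).elim (fun heq ↦ hb ?_) (not_lexLtPerm_insert_erase ha hb hlt)
  exact heq ▸ Finset.mem_insert_self b _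

theorem IsLexMinBase.swap_mul {i j : Fin n} {B' : Finset (Fin n)} (h : IsLexMinBase M σ B)
    (h' : IsLexMinBase M (Equiv.swap i j * σ) B') (hij : σ.symm i ⋖ σ.symm j) :
    B' = B ∨ B' = B.map (Equiv.swap i j).toEmbedding := by
  have hsymm : ⇑(Equiv.swap i j * σ).symm = σ.symm ∘ Equiv.swap i j := rfl
  have hB' := h'.coe_eq_greedyBasis
  rw [hsymm] at hB'
  rw [← Finset.coe_inj, ← Finset.coe_inj, Finset.coe_map, Equiv.coe_toEmbedding, hB',
    h.coe_eq_greedyBasis]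
  exact greedyBasis_comp_swap M σ.symm.injective hij

end LexMinBase

section LinearMatroid

variable {α K V : Type*} [DivisionRing K] [AddCommGroup V] [Module K V]

theorem exists_insert_linearIndepOn {v : α → V} {I B : Set α} (hI : LinearIndepOn K v I)
    (hImax : ¬ Maximal (LinearIndepOn K v) I) (hB : Maximal (LinearIndepOn K v) B) :
    ∃ x ∈ B \ I, LinearIndepOn K v (insert x I) := by
  by_contra! hdep
  have hBI : Submodule.span K (v '' B) ≤ Submodule.span K (v '' I) := by
    rw [Submodule.span_le, Set.image_subset_iff]
    exact fun x hxB ↦ hI.mem_span_iff.2 fun hins ↦ by_contra fun hxI ↦ hdep x ⟨hxB, hxI⟩ hins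
  refine hImax ⟨hI, fun J hJ hIJ x hxJ ↦ ?_⟩
  have hx : v x ∈ Submodule.span K (v '' I) := hBI <| hB.prop.mem_span_iff.2 fun hins ↦
    hB.le_of_ge hins (Set.subset_insert x B) (Set.mem_insert x B)
  exact hI.mem_span_iff.1 hx (hJ.mono (Set.insert_subset hxJ hIJ))

/-- The matroid on `α` whose independent sets index linearly independent subfamilies of `v`. -/
def linearMatroid (K : Type*) [DivisionRing K] [Module K V] (v : α → V) : Matroid α :=
  (IndepMatroid.ofFinitary Set.univ (LinearIndepOn K v) (linearIndepOn_empty K v)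
    (fun _ _ hJ hIJ ↦ hJ.mono hIJ) (fun _ _ ↦ exists_insert_linearIndepOn)
    linearIndepOn_of_finite (fun I _ ↦ Set.subset_univ I)).matroid

variable {v : α → V}

theorem linearMatroid_indep {I : Set α} : (linearMatroid K v).Indep I ↔ LinearIndepOn K v I :=
  Iff.rfl

theorem linearMatroid_rankPos {e : α} (he : v e ≠ 0) : (linearMatroid K v).RankPos :=
  (linearMatroid_indep.2 (LinearIndepOn.singleton he)).rankPos_of_nonempty
    (Set.singleton_nonempty e)

theorem linearMatroid_isBase_of_card_eq_finrank [FiniteDimensional K V] {B : Finset α}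
    (hB : LinearIndepOn K v (B : Set α)) (hcard : B.card = Module.finrank K V) :
    (linearMatroid K v).IsBase B := by
  refine (linearMatroid_indep.2 hB).isBase_of_maximal fun J hJ hBJ ↦ ?_
  refine B.finite_toSet.eq_of_subset_of_encard_le hBJ ?_
  have hJ := (linearMatroid_indep.1 hJ).encard_le_toENat_rank
  rwa [← Module.finrank_eq_rank, Cardinal.toENat_nat, ← hcard, ← Set.encard_coe_eq_coe_finsetCard]
    at hJ

theorem isLexMinBase_linearMatroid {n : ℕ} [FiniteDimensional K V] {v : Fin n → V}
    {σ : Equiv.Perm (Fin n)} {B : Finset (Fin n)} (hB : LinearIndepOn K v (B : Set (Fin n)))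
    (hcard : B.card = Module.finrank K V)
    (hleast : ∀ B' : Finset (Fin n), B'.card = Module.finrank K V →
      LinearIndepOn K v (B' : Set (Fin n)) → B = B' ∨ lexLtPerm σ B B') :
    IsLexMinBase (linearMatroid K v) σ B := by
  have hbase := linearMatroid_isBase_of_card_eq_finrank hB hcard
  refine ⟨hbase, fun B' hB' ↦ hleast B' ?_ (linearMatroid_indep.1 hB'.indep)⟩
  rw [← hcard, ← Set.ncard_coe_finset, ← Set.ncard_coe_finset,
    hB'.ncard_eq_ncard_of_isBase hbase]

end LinearMatroid

section Numerator

variable {τ R : Type*} [CommRing R]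

theorem rename_aeval_X {υ : Type*} (f : τ → υ) (F : Polynomial R) (k : τ) :
    rename f (Polynomial.aeval (X k : MvPolynomial τ R) F) =
      Polynomial.aeval (X (f k) : MvPolynomial υ R) F := by
  rw [← Polynomial.aeval_algHom_apply, rename_X]

theorem degreeOf_aeval_X_le [DecidableEq τ] (F : Polynomial R) (i k : τ) :
    degreeOf i (Polynomial.aeval (X k : MvPolynomial τ R) F) ≤
      if i = k then F.natDegree else 0 := by
  obtain _ | _ := subsingleton_or_nontrivial R
  · rw [Subsingleton.elim (Polynomial.aeval _ F) (0 : MvPolynomial τ R), degreeOf_zero]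
    exact Nat.zero_le _
  rw [Polynomial.aeval_eq_sum_range]
  refine (degreeOf_sum_le i _ _).trans (Finset.sup_le fun m hm ↦ ?_)
  calc degreeOf i (F.coeff m • X k ^ m : MvPolynomial τ R)
      ≤ degreeOf i (X k ^ m : MvPolynomial τ R) := by
        rw [smul_eq_C_mul]
        exact degreeOf_C_mul_le _ _ _
    _ ≤ m * degreeOf i (X k : MvPolynomial τ R) := degreeOf_pow_le _ _ _
    _ = m * if i = k then 1 else 0 := by rw [degreeOf_X]
    _ ≤ if i = k then F.natDegree else 0 := by
      split_ifs
      · simpa using Nat.lt_succ_iff.1 (Finset.mem_range.1 hm)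
      · simp

variable [Fintype τ] [DecidableEq τ]

/-- The numerator `∏_{k ∉ s} F(X_k)` of the summand whose basis is `s` in Fink's formula. -/
def complementProduct (F : Polynomial R) (s : Finset τ) : MvPolynomial τ R :=
  ∏ k ∈ sᶜ, Polynomial.aeval (X k) F

theorem rename_complementProduct (F : Polynomial R) (s : Finset τ) (e : Equiv.Perm τ) :
    rename e (complementProduct F s) = complementProduct F (s.map e.toEmbedding) := by
  rw [complementProduct, complementProduct, map_prod]
  exact Finset.prod_equiv e (by simp) fun k _ ↦ rename_aeval_X e F k

theorem degreeOf_complementProduct_le (F : Polynomial R) (s : Finset τ) (i : τ) :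
    degreeOf i (complementProduct F s) ≤ F.natDegree :=
  calc degreeOf i (complementProduct F s)
      ≤ ∑ k ∈ sᶜ, degreeOf i (Polynomial.aeval (X k : MvPolynomial τ R) F) :=
        degreeOf_prod_le _ _ _
    _ ≤ ∑ k ∈ sᶜ, if i = k then F.natDegree else 0 :=
        Finset.sum_le_sum fun k _ ↦ degreeOf_aeval_X_le F i k
    _ ≤ F.natDegree := by
        rw [Finset.sum_ite_eq]
        split_ifs <;> simp

theorem IsLexMinBase.X_sub_X_dvd_complementProduct_sub {n : ℕ} {M : Matroid (Fin n)}
    {σ : Equiv.Perm (Fin n)} {B B' : Finset (Fin n)} {i j : Fin n} (F : Polynomial R)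
    (h : IsLexMinBase M σ B) (h' : IsLexMinBase M (Equiv.swap i j * σ) B')
    (hij : σ.symm i ⋖ σ.symm j) :
    X j - X i ∣ complementProduct F B' - complementProduct F B := by
  obtain rfl | rfl := h.swap_mul h' hij
  · simp
  · rw [← rename_complementProduct, dvd_sub_comm]
    exact X_sub_X_dvd_sub_rename_swap i j _

theorem degreeOf_complementProduct_le_add {n r : ℕ} [IsDomain R] {M : Matroid (Fin n)}
    (hM : n = 1 → M.RankPos) {F : Polynomial R} (hF : F.natDegree ≤ r + 1)
    {B : Finset (Fin n)} (hB : M.IsBase B) (σ : Equiv.Perm (Fin n)) (i : Fin n) :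
    degreeOf i (complementProduct F B) ≤ r + degreeOf i (chainDenominator R σ) := by
  obtain hn | hn : 1 < n ∨ n = 1 := by have := i.pos; omega
  · calc degreeOf i (complementProduct F B)
        ≤ r + 1 := (degreeOf_complementProduct_le F B i).trans hF
      _ ≤ r + degreeOf i (chainDenominator R σ) :=
        Nat.add_le_add_left (degreeOf_chainDenominator_pos hn σ i) r
  · have := hM hn
    subst hn
    have hBuniv : B = Finset.univ := by
      obtain ⟨b, hb⟩ := hB.nonempty
      exact Finset.eq_univ_of_forall fun k ↦ Subsingleton.elim b k ▸ hb
    rw [complementProduct, hBuniv, Finset.compl_univ, Finset.prod_empty, degreeOf_one]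
    exact Nat.zero_le _

end Numerator

theorem natDegree_Fpoly_le (r : ℕ) : (Fpoly r).natDegree ≤ r + 1 := by
  refine (Polynomial.natDegree_prod_le _ _).trans ?_
  simp

end FinkFormula

open FinkFormula in
theorem fink_formula_is_polynomial_general {R : Type*} [CommRing R] [IsDomain R] {n r : ℕ}
    (M : Matroid (Fin n)) (hM : n = 1 → M.RankPos) (F : Polynomial R) (hF : F.natDegree ≤ r + 1)
    (B : Equiv.Perm (Fin n) → Finset (Fin n)) (hB : ∀ σ, IsLexMinBase M σ (B σ)) :
    ∃ p : MvPolynomial (Fin n) R, (∀ i, p.degreeOf i ≤ r) ∧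
      algebraMap _ (FractionRing (MvPolynomial (Fin n) R)) p =
        ∑ σ, algebraMap _ (FractionRing (MvPolynomial (Fin n) R)) (complementProduct F (B σ)) *
          (algebraMap _ (FractionRing (MvPolynomial (Fin n) R)) (chainDenominator R σ))⁻¹ :=
  exists_polynomial_eq_sum_div_chainDenominator
    (fun σ _ _ hij ↦ (hB σ).X_sub_X_dvd_complementProduct_sub F (hB _) hij)
    (fun σ i ↦ degreeOf_complementProduct_le_add hM hF (hB σ).1 σ i)

/-- Polynomiality and degree bound of the Fink-type formula: the sum over permutations
`σ` of `(∏_{i ∉ B(σ)} F(zᵢ)) / ∏_{k=1}^{n-1} (z_{σ(k+1)} − z_{σ(k)})`, where `B(σ)` is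
the `≺_σ`-lexicographically first column basis of `M`, lies in `R[z₁,…,zₙ]` and has
degree at most `r` in each variable `zᵢ`. -/
theorem fink_formula_is_polynomial {K : Type*} [Field K] {d n : ℕ} (hn : 0 < n)
    (M : Matrix (Fin d) (Fin n) K) (hM : M.rank = d)
    (hcols : ∀ i : Fin n, (fun j => M j i) ≠ 0)
    (r : ℕ)
    (B : Equiv.Perm (Fin n) → Finset (Fin n))
    (hBcard : ∀ σ, (B σ).card = d)
    (hBind : ∀ σ, LinearIndependent K (fun i : (B σ) => M.transpose (i : Fin n)))
    (hBleast : ∀ σ, ∀ B' : Finset (Fin n), B'.card = d →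
      LinearIndependent K (fun i : B' => M.transpose (i : Fin n)) →
      B σ = B' ∨ lexLtPerm σ (B σ) B') :
    ∃ p : Sring r n, (∀ i : Fin n, p.degreeOf i ≤ r) ∧
      algebraMap (Sring r n) (FractionRing (Sring r n)) p =
        ∑ σ : Equiv.Perm (Fin n),
          (algebraMap (Sring r n) (FractionRing (Sring r n))
              (∏ i ∈ (B σ)ᶜ, Polynomial.aeval (MvPolynomial.X i : Sring r n) (Fpoly r))) *
            (algebraMap (Sring r n) (FractionRing (Sring r n))
              (∏ k ∈ (Finset.range (n - 1)).attach,
                (MvPolynomial.X (σ ⟨k.1 + 1, by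
                    have := Finset.mem_range.mp k.2; omega⟩) -
                  MvPolynomial.X (σ ⟨k.1, by
                    have := Finset.mem_range.mp k.2; omega⟩) : Sring r n)))⁻¹ := by
  have hfin : Module.finrank K (Fin d → K) = d := Module.finrank_fin_fun K
  exact fink_formula_is_polynomial_general (FinkFormula.linearMatroid K M.transpose)
    (fun _ ↦ FinkFormula.linearMatroid_rankPos (hcols ⟨0, hn⟩)) (Fpoly r)
    (FinkFormula.natDegree_Fpoly_le r) B fun σ ↦ FinkFormula.isLexMinBase_linearMatroid (hBind σ)
      ((hBcard σ).trans hfin.symm) (hfin.symm ▸ hBleast σ)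
end
end
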